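/- arXiv:2306.06247 — 10 statements merged into one kernel-verified Lean document; each statement's English description precedes it below -/
import Mathlib

section
/- Let 𝒳 be a nonempty set, 𝒴 = ℕ, and 𝒮(𝒴) = {ℕ \ {y} : y ∈ ℕ} the collection of complements of singletons. Let ℋ = {h_y : y ∈ ℕ} be the class of constant functions h_y(x) = y. Then for every deterministic online learner 𝒜 and every T ∈ ℕ, there exists a stream (x_1,S_1),…,(x_T,S_T) ∈ (𝒳 × 𝒮(𝒴))^T that is realizable by ℋ and on which 𝒜 errs at every round, i.e., ŷ_t ∉ S_t for all t ∈ [T]. -/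
/-- The history (list of labeled examples) presented to an online learner before round `t`,
on the stream given by instances `x` and feedback sets `S`. -/
def hist {X Y : Type*} (x : ℕ → X) (S : ℕ → Set Y) (t : ℕ) : List (X × Set Y) :=
  (List.range t).map fun i => (x i, S i)

/-!
The adversary reveals, at each round, the complement of the label the learner is about to predict.
As the learner is deterministic, this adaptive play can be computed in advance and is an ordinary
stream. Finitely many rounds exclude only finitely many labels, so some label survives, and the
corresponding constant function realizes the stream.
-/

section

variable {X Y : Type*}

theorem hist_eq_ofFn (x : ℕ → X) (S : ℕ → Set Y) (t : ℕ) :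
    hist x S t = List.ofFn fun i : Fin t => (x i, S i) := by
  rw [hist, List.ofFn_eq_map, ← List.map_coe_finRange_eq_range, List.map_map]
  rfl

/-- The feedback sets produced on the instances `x` by the adaptive adversary `R`, which chooses
the feedback set of each round as a function of the history so far and the current instance. The
history is indexed by `Fin t`, rather than written with `hist`, so that the recursion is visibly
well founded. -/
def adaptiveFeedback (x : ℕ → X) (R : List (X × Set Y) → X → Set Y) (t : ℕ) : Set Y :=
  R (List.ofFn fun i : Fin t => (x i, adaptiveFeedback x R i)) (x t)

theorem adaptiveFeedback_eq (x : ℕ → X) (R : List (X × Set Y) → X → Set Y) (t : ℕ) :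
    adaptiveFeedback x R t = R (hist x (adaptiveFeedback x R) t) (x t) := by
  rw [adaptiveFeedback, hist_eq_ofFn]

theorem exists_forall_lt_ne [Infinite Y] (a : ℕ → Y) (T : ℕ) : ∃ y, ∀ t < T, y ≠ a t := by
  obtain ⟨y, hy⟩ := ((Set.finite_Iio T).image a).exists_notMem
  exact ⟨y, fun t ht hyt => hy ⟨t, ht, hyt.symm⟩⟩

theorem stmt0_general [Infinite Y] (A : List (X × Set Y) → X → Y) (x : ℕ → X) :
    ∃ S : ℕ → Set Y,
      (∀ t, ∃ y, S t = {y}ᶜ) ∧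
      (∀ T, ∃ y, ∀ t < T, y ∈ S t) ∧
      (∀ t, A (hist x S t) (x t) ∉ S t) := by
  let S : ℕ → Set Y := adaptiveFeedback x fun h z => {A h z}ᶜ
  have hS (t : ℕ) : S t = {A (hist x S t) (x t)}ᶜ := adaptiveFeedback_eq x _ t
  refine ⟨S, fun t => ⟨_, hS t⟩, fun T => ?_, fun t hmem => ?_⟩
  · obtain ⟨y, hy⟩ := exists_forall_lt_ne (fun t => A (hist x S t) (x t)) T
    exact ⟨y, fun t ht => (hS t).symm ▸ hy t ht⟩
  · rw [hS t] at hmem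
    exact hmem rfl

end

/-- With `𝒴 = ℕ`, `𝒮(𝒴)` the complements of singletons, and `ℋ` the class of
constant functions, every deterministic online learner errs on every round of some realizable
stream of any length `T`. -/
theorem stmt0 {X : Type*} [Nonempty X]
    (A : List (X × Set ℕ) → X → ℕ) (T : ℕ) :
    ∃ (x : ℕ → X) (S : ℕ → Set ℕ),
      (∀ t < T, ∃ y : ℕ, S t = ({y}ᶜ : Set ℕ)) ∧
      (∃ y : ℕ, ∀ t < T, y ∈ S t) ∧
      (∀ t < T, A (hist x S t) (x t) ∉ S t) := by
  obtain ⟨S, hcompl, hreal, herr⟩ := stmt0_general A fun _ => Classical.arbitrary X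
  exact ⟨_, S, fun t _ => hcompl t, hreal T, fun t _ => herr t⟩
end

section
/- Let 𝒳 be a nonempty set, 𝒴 = ℕ with the discrete σ-algebra, and 𝒮(𝒴) = {ℕ \ {y} : y ∈ ℕ}. For every T ∈ ℕ there exists a randomized online learner 𝒜 (namely, the learner whose output measure at every round is the uniform distribution on {1,…,T}) such that for every stream (x_1,S_1),…,(x_T,S_T) ∈ (𝒳 × 𝒮(𝒴))^T, the expected cumulative loss satisfies Σ_{t=1}^T μ̂_t(𝒴 \ S_t) ≤ 1. -/
/-!
Against complements of singletons, the loss in a round is the mass the learner puts on a single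
point. The uniform distribution on a finite set `s` puts mass at most `1 / #s` on any point, so
over `T ≤ #s` rounds the learner that always predicts it loses at most `T / #s ≤ 1`.
-/

open MeasureTheory

section UniformLearner

open ProbabilityTheory
open scoped Finset

theorem cond_apply_le_div {Ω : Type*} [MeasurableSpace Ω] (μ : Measure Ω) (s B : Set Ω) :
    μ[B | s] ≤ μ B / μ s := by
  rw [ProbabilityTheory.cond, Measure.smul_apply, smul_eq_mul, ENNReal.div_eq_inv_mul]
  exact mul_le_mul_right (Measure.restrict_apply_le s B) _

variable {X Y : Type*} [MeasurableSpace Y] [MeasurableSingletonClass Y]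

theorem uniformOn_finset_apply_le (s : Finset Y) (B : Set Y) :
    uniformOn (s : Set Y) B ≤ Measure.count B / #s := by
  rw [uniformOn, ← Measure.count_apply_finset s]
  exact cond_apply_le_div _ _ _

variable {s : Finset Y}

/-- The randomized online learner that ignores the history and the current instance and always
predicts the uniform distribution on the finite set `s`. -/
noncomputable def uniformLearner (hs : s.Nonempty) :
    List (X × Set Y) → X → ProbabilityMeasure Y :=
  fun _ _ => ⟨uniformOn s, isProbabilityMeasure_uniformOn s.finite_toSet hs⟩

theorem sum_uniformLearner_compl_le (hs : s.Nonempty) (x : ℕ → X) (S : ℕ → Set Y) (T : ℕ) :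
    ∑ t ∈ Finset.range T, (uniformLearner hs (hist x S t) (x t)).toMeasure (S t)ᶜ ≤
      (∑ t ∈ Finset.range T, Measure.count (S t)ᶜ) / #s := by
  rw [div_eq_mul_inv, Finset.sum_mul]
  exact Finset.sum_le_sum fun t _ => uniformOn_finset_apply_le s (S t)ᶜ

theorem stmt1_general (hs : s.Nonempty) {T : ℕ} (hT : T ≤ #s) (x : ℕ → X) (S : ℕ → Set Y)
    (hS : ∀ t < T, ∃ y, S t = {y}ᶜ) :
    ∑ t ∈ Finset.range T, (uniformLearner hs (hist x S t) (x t)).toMeasure (S t)ᶜ ≤ 1 := by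
  have count_compl : ∀ t ∈ Finset.range T, Measure.count (S t)ᶜ = 1 := by
    intro t ht
    obtain ⟨y, hy⟩ := hS t (Finset.mem_range.mp ht)
    rw [hy, compl_compl, Measure.count_singleton]
  calc _ ≤ (∑ t ∈ Finset.range T, Measure.count (S t)ᶜ) / #s :=
        sum_uniformLearner_compl_le hs x S T
    _ = T / #s := by
        rw [Finset.sum_congr rfl count_compl, Finset.sum_const, Finset.card_range, nsmul_one]
    _ ≤ 1 := ENNReal.div_le_of_le_mul (by simpa using hT)

end UniformLearner

/-- With `𝒴 = ℕ` (discrete σ-algebra) and `𝒮(𝒴)` the complements of singletons,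
for every horizon `T` there is a randomized online learner whose expected cumulative loss
`Σ_t μ̂_t(𝒴 \ S_t)` is at most 1 on every stream of length `T` labeled by sets from `𝒮(𝒴)`. -/
theorem stmt1 {X : Type*} [Nonempty X] (T : ℕ) :
    ∃ A : List (X × Set ℕ) → X → ProbabilityMeasure ℕ,
      ∀ (x : ℕ → X) (S : ℕ → Set ℕ),
        (∀ t < T, ∃ y : ℕ, S t = ({y}ᶜ : Set ℕ)) →
        ∑ t ∈ Finset.range T, (A (hist x S t) (x t)).toMeasure ((S t)ᶜ) ≤ 1 := by
  -- The `max` only matters for `T = 0`, where `{1, …, T}` carries no probability measure.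
  have hs : (Finset.Icc 1 (max T 1)).Nonempty := Finset.nonempty_Icc.mpr (le_max_right T 1)
  exact ⟨uniformLearner hs, stmt1_general hs (by simp)⟩
end

section
/- Let (𝒴, σ(𝒴)) be a measurable space, 𝒮(𝒴) ⊆ σ(𝒴), 𝒳 a set, and ℋ ⊆ 𝒴^𝒳 nonempty. Suppose d ∈ ℕ is such that ℋ does not shatter any Set Littlestone tree of depth d+1. Then there exists a deterministic online learner 𝒜 such that for every T ∈ ℕ and every stream (x_1,S_1),…,(x_T,S_T) ∈ (𝒳 × 𝒮(𝒴))^T that is realizable by ℋ, the number of mistakes satisfies Σ_{t=1}^T 1{ŷ_t ∉ S_t} ≤ d. -/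
open MeasureTheory

/-- Restriction of a path of length `d` to its strict prefix before position `t`. -/
def pref {M : Type*} {d : ℕ} (y : Fin d → M) (t : Fin d) : Fin (t : ℕ) → M :=
  fun i => y ⟨(i : ℕ), i.isLt.trans t.isLt⟩

/-- Restriction of a path of length `d` to its prefix up to and including position `t`. -/
def prefS {M : Type*} {d : ℕ} (y : Fin d → M) (t : Fin d) : Fin ((t : ℕ) + 1) → M :=
  fun i => y ⟨(i : ℕ), lt_of_le_of_lt (Nat.lt_succ_iff.mp i.isLt) t.isLt⟩

/-- `ℋ` shatters a Set Littlestone tree of depth `d` (with feedback sets from `𝒮`):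
there are node labels `node t : 𝒴^t → 𝒳` and edge labels `edge t : 𝒴^{t+1} → 𝒮` such that
for every path `y ∈ 𝒴^d`, (a) `y t ∉ edge t (y_{≤ t})` for all `t`, and (b) some `h ∈ ℋ`
satisfies `h (node t (y_{< t})) ∈ edge t (y_{≤ t})` for all `t`. -/
def SLShatter {X Y : Type*} (𝒮 : Set (Set Y)) (H : Set (X → Y)) (d : ℕ) : Prop :=
  ∃ (node : ∀ t : Fin d, (Fin (t : ℕ) → Y) → X)
    (edge : ∀ t : Fin d, (Fin ((t : ℕ) + 1) → Y) → Set Y),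
    (∀ (t : Fin d) (ys : Fin ((t : ℕ) + 1) → Y), edge t ys ∈ 𝒮) ∧
    ∀ y : Fin d → Y,
      (∀ t : Fin d, y t ∉ edge t (prefS y t)) ∧
      ∃ h ∈ H, ∀ t : Fin d, h (node t (pref y t)) ∈ edge t (prefS y t)

/-- `ℋ` `γ`-shatters a measure tree of depth `d`: nodes are labeled along paths of
probability measures, and for every path `μ ∈ Π(𝒴)^d`, (a) `μ t (edge t (μ_{≤t})) ≤ 1 - γ`
(strict inequality `< 1` when `γ = 0`), and (b) some `h ∈ ℋ` is consistent with the edges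
along the path. -/
def MSShatter {X Y : Type*} [MeasurableSpace Y] (𝒮 : Set (Set Y)) (H : Set (X → Y))
    (γ : ℝ) (d : ℕ) : Prop :=
  ∃ (node : ∀ t : Fin d, (Fin (t : ℕ) → ProbabilityMeasure Y) → X)
    (edge : ∀ t : Fin d, (Fin ((t : ℕ) + 1) → ProbabilityMeasure Y) → Set Y),
    (∀ (t : Fin d) (ms : Fin ((t : ℕ) + 1) → ProbabilityMeasure Y), edge t ms ∈ 𝒮) ∧
    ∀ μ : Fin d → ProbabilityMeasure Y,
      (∀ t : Fin d,
        if γ = 0 then (μ t).toMeasure (edge t (prefS μ t)) < 1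
        else (μ t).toMeasure (edge t (prefS μ t)) ≤ 1 - ENNReal.ofReal γ) ∧
      ∃ h ∈ H, ∀ t : Fin d, h (node t (pref μ t)) ∈ edge t (prefS μ t)

/-- `ℋ` shatters a `p`-Set Littlestone tree of depth `d`: paths are sequences in `[p]`,
and for every path `q ∈ [p]^d`, (a) the `p` sets labeling the outgoing edges of each node
along the path have empty intersection, and (b) some `h ∈ ℋ` is consistent with the edges
along the path. -/
def PSLShatter {X Y : Type*} (𝒮 : Set (Set Y)) (H : Set (X → Y)) (p d : ℕ) : Prop :=
  ∃ (node : ∀ t : Fin d, (Fin (t : ℕ) → Fin p) → X)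
    (edge : ∀ t : Fin d, (Fin ((t : ℕ) + 1) → Fin p) → Set Y),
    (∀ (t : Fin d) (qs : Fin ((t : ℕ) + 1) → Fin p), edge t qs ∈ 𝒮) ∧
    ∀ q : Fin d → Fin p,
      (∀ t : Fin d, ⋂ i : Fin p, edge t (Fin.snoc (pref q t) i) = ∅) ∧
      ∃ h ∈ H, ∀ t : Fin d, h (node t (pref q t)) ∈ edge t (prefS q t)

/-!
The learner is the Standard Optimal Algorithm, run on the version space `V` of the hypotheses
consistent with the history. Let the rank of `V` be the least depth that `V` does not shatter. If at
an instance `x` every prediction could be refuted by a set of `𝒮` without lowering the rank `k + 1`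
of `V`, then a root labeled `x`, with a tree of depth `k` for the restricted class hung below each
of its edges, would be a tree of depth `k + 1` shattered by `V`. So some prediction forces the rank
to drop whenever it is refuted, and the learner makes it. The rank is at most `d + 1` at the start
and at least `1` as long as the version space is nonempty, which leaves room for `d` mistakes.
-/

theorem card_filter_range_add_le {R : Type*} [AddMonoidWithOne R] [Preorder R] [AddLeftMono R]
    {p : ℕ → Prop} [DecidablePred p] {Φ : ℕ → R} {T : ℕ}
    (hle : ∀ t < T, Φ (t + 1) ≤ Φ t) (hdrop : ∀ t < T, p t → 1 + Φ (t + 1) ≤ Φ t) :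
    ((Finset.range T).filter p).card + Φ T ≤ Φ 0 := by
  induction T with
  | zero => simp
  | succ T ih =>
    refine le_trans ?_ (ih (fun t ht => hle t (by omega)) fun t ht => hdrop t (by omega))
    rw [Finset.range_add_one, Finset.filter_insert]
    split_ifs with hp
    · rw [Finset.card_insert_of_notMem (by simp), Nat.cast_succ, add_assoc]
      exact add_le_add_right (hdrop T T.lt_succ_self hp) _
    · exact add_le_add_right (hle T T.lt_succ_self) _

section

variable {X Y : Type*} {𝒮 : Set (Set Y)} {H V W : Set (X → Y)} {n : ℕ}

theorem SLShatter.mono (hVW : V ⊆ W) (hV : SLShatter 𝒮 V n) : SLShatter 𝒮 W n := by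
  obtain ⟨node, edge, hedge, hpath⟩ := hV
  refine ⟨node, edge, hedge, fun y => ?_⟩
  obtain ⟨havoid, h, hh, hmem⟩ := hpath y
  exact ⟨havoid, h, hVW hh, hmem⟩

theorem slShatter_zero_of_nonempty (hV : V.Nonempty) : SLShatter 𝒮 V 0 := by
  obtain ⟨h, hh⟩ := hV
  exact ⟨Fin.rec0, Fin.rec0, Fin.rec0, fun _ => ⟨Fin.rec0, h, hh, Fin.rec0⟩⟩

theorem slShatter_succ_of_forall_exists (x : X)
    (hx : ∀ y, ∃ S ∈ 𝒮, y ∉ S ∧ SLShatter 𝒮 {h ∈ V | h x ∈ S} n) :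
    SLShatter 𝒮 V (n + 1) := by
  choose S hS hyS node edge hedge hpath using hx
  refine ⟨Fin.cases (fun _ => x) fun t (ys : Fin (t + 1) → Y) => node (ys 0) t (Fin.tail ys),
    Fin.cases (fun ys => S (ys 0)) fun t ys => edge (ys 0) t (Fin.tail ys),
    Fin.cases (fun ys => hS (ys 0)) fun t ys => hedge (ys 0) t (Fin.tail ys), fun y => ?_⟩
  obtain ⟨havoid, h, hh, hmem⟩ := hpath (y 0) (Fin.tail y)
  exact ⟨Fin.cases (hyS (y 0)) havoid, h, hh.1, Fin.cases hh.2 hmem⟩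

/-- The least depth that `V` does not shatter, or `⊤` if there is none. For nonempty `V` this is the
Set Littlestone dimension plus one; the shift gives the empty class rank `0`. -/
noncomputable def slRank (𝒮 : Set (Set Y)) (V : Set (X → Y)) : ℕ∞ :=
  sInf ((↑) '' {n : ℕ | ¬ SLShatter 𝒮 V n})

theorem slRank_le (hn : ¬ SLShatter 𝒮 V n) : slRank 𝒮 V ≤ n :=
  sInf_le (Set.mem_image_of_mem _ hn)

theorem slShatter_of_lt_slRank (hn : n < slRank 𝒮 V) : SLShatter 𝒮 V n := by
  contrapose! hn
  exact slRank_le hn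

theorem slRank_mono (hVW : V ⊆ W) : slRank 𝒮 V ≤ slRank 𝒮 W :=
  sInf_le_sInf <| Set.image_mono fun _ hn hV => hn (hV.mono hVW)

theorem not_slShatter_of_slRank_eq (hn : slRank 𝒮 V = n) : ¬ SLShatter 𝒮 V n := by
  have hne : ((↑) '' {n : ℕ | ¬ SLShatter 𝒮 V n} : Set ℕ∞).Nonempty := by
    by_contra! hempty
    simp [slRank, hempty] at hn
  obtain ⟨m, hm, hmV⟩ := csInf_mem hne
  rwa [← ENat.natCast_inj.mp (hmV.trans hn)]

theorem slRank_pos (hV : V.Nonempty) : 0 < slRank 𝒮 V :=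
  pos_iff_ne_zero.mpr fun h => not_slShatter_of_slRank_eq h (slShatter_zero_of_nonempty hV)

/-- The prediction rule of the Standard Optimal Algorithm: on the version space `V`, predicting `y`
at `x` is optimal if every feedback set that makes it a mistake lowers the rank. -/
def IsOptimalPrediction (𝒮 : Set (Set Y)) (V : Set (X → Y)) (x : X) (y : Y) : Prop :=
  ∀ S ∈ 𝒮, y ∉ S → slRank 𝒮 {h ∈ V | h x ∈ S} < slRank 𝒮 V

theorem exists_isOptimalPrediction (hV : V.Nonempty) (hfin : slRank 𝒮 V ≠ ⊤) (x : X) :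
    ∃ y, IsOptimalPrediction 𝒮 V x y := by
  obtain ⟨r, hr⟩ := ENat.ne_top_iff_exists.mp hfin
  have hr0 : r ≠ 0 := by
    rintro rfl
    exact (slRank_pos hV).ne hr
  obtain ⟨k, rfl⟩ := Nat.exists_eq_add_one_of_ne_zero hr0
  by_contra! hrefute
  simp only [IsOptimalPrediction, not_forall, not_lt] at hrefute
  refine not_slShatter_of_slRank_eq hr.symm <| slShatter_succ_of_forall_exists x fun y => ?_
  obtain ⟨S, hS, hyS, hle⟩ := hrefute y
  have hlt : (k : ℕ∞) < slRank 𝒮 V := hr ▸ Nat.cast_lt.mpr k.lt_succ_self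
  exact ⟨S, hS, hyS, slShatter_of_lt_slRank (hlt.trans_le hle)⟩

/-- The version space of `H` after the history `L`: the hypotheses consistent with all its labeled
examples. -/
def versionSpace (H : Set (X → Y)) (L : List (X × Set Y)) : Set (X → Y) :=
  {h ∈ H | ∀ p ∈ L, h p.1 ∈ p.2}

theorem versionSpace_subset (H : Set (X → Y)) (L : List (X × Set Y)) : versionSpace H L ⊆ H :=
  Set.sep_subset _ _

theorem mem_versionSpace_hist {x : ℕ → X} {S : ℕ → Set Y} {t : ℕ} {h : X → Y} :
    h ∈ versionSpace H (hist x S t) ↔ h ∈ H ∧ ∀ i < t, h (x i) ∈ S i := by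
  simp [versionSpace, hist]

theorem versionSpace_hist_succ (H : Set (X → Y)) (x : ℕ → X) (S : ℕ → Set Y) (t : ℕ) :
    versionSpace H (hist x S (t + 1)) = {h ∈ versionSpace H (hist x S t) | h (x t) ∈ S t} := by
  ext h
  simp only [Set.mem_ofPred_eq, mem_versionSpace_hist, Nat.forall_lt_succ_right, and_assoc]

/-- The learners that follow the Standard Optimal Algorithm for `H` as long as the history is
consistent with some hypothesis; afterwards their predictions are arbitrary. -/
def IsOptimalLearner (𝒮 : Set (Set Y)) (H : Set (X → Y)) (A : List (X × Set Y) → X → Y) : Prop :=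
  ∀ L x, (versionSpace H L).Nonempty → IsOptimalPrediction 𝒮 (versionSpace H L) x (A L x)

theorem exists_isOptimalLearner (hH : H.Nonempty) (hfin : slRank 𝒮 H ≠ ⊤) :
    ∃ A, IsOptimalLearner 𝒮 H A := by
  have hpred (L : List (X × Set Y)) (x : X) : ∃ y, (versionSpace H L).Nonempty →
      IsOptimalPrediction 𝒮 (versionSpace H L) x y := by
    by_cases hne : (versionSpace H L).Nonempty
    · obtain ⟨y, hy⟩ := exists_isOptimalPrediction hne
        (ne_top_of_le_ne_top hfin (slRank_mono (versionSpace_subset H L))) x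
      exact ⟨y, fun _ => hy⟩
    · exact ⟨hH.some x, fun h => absurd h hne⟩
  choose A hA using hpred
  exact ⟨A, hA⟩

open scoped Classical in
theorem IsOptimalLearner.card_mistakes_lt_slRank {A : List (X × Set Y) → X → Y}
    (hA : IsOptimalLearner 𝒮 H A) {T : ℕ} {x : ℕ → X} {S : ℕ → Set Y}
    (hS : ∀ t < T, S t ∈ 𝒮) (hreal : ∃ h ∈ H, ∀ t < T, h (x t) ∈ S t) :
    ((Finset.range T).filter fun t => A (hist x S t) (x t) ∉ S t).card < slRank 𝒮 H := by
  obtain ⟨h, hh, hcons⟩ := hreal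
  have hne (t : ℕ) (ht : t ≤ T) : (versionSpace H (hist x S t)).Nonempty :=
    ⟨h, mem_versionSpace_hist.mpr ⟨hh, fun i hi => hcons i (hi.trans_le ht)⟩⟩
  have hbudget : ((Finset.range T).filter fun t => A (hist x S t) (x t) ∉ S t).card +
      slRank 𝒮 (versionSpace H (hist x S T)) ≤ slRank 𝒮 (versionSpace H (hist x S 0)) := by
    refine card_filter_range_add_le (Φ := fun t => slRank 𝒮 (versionSpace H (hist x S t)))
      (fun t _ => ?_) (fun t ht hmistake => ?_)
    · rw [versionSpace_hist_succ]
      exact slRank_mono (Set.sep_subset _ _)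
    · rw [versionSpace_hist_succ, add_comm]
      exact Order.add_one_le_of_lt (hA _ _ (hne t ht.le) _ (hS t ht) hmistake)
  refine ENat.natCast_add_one_le_iff.mp ?_
  calc (((Finset.range T).filter fun t => A (hist x S t) (x t) ∉ S t).card : ℕ∞) + 1
    _ ≤ _ + slRank 𝒮 (versionSpace H (hist x S T)) := by
      gcongr
      exact Order.one_le_iff_pos.mpr (slRank_pos (hne T le_rfl))
    _ ≤ slRank 𝒮 (versionSpace H (hist x S 0)) := hbudget
    _ ≤ slRank 𝒮 H := slRank_mono (versionSpace_subset H _)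

end

open scoped Classical in
theorem stmt3_general {X Y : Type*} (𝒮 : Set (Set Y)) (H : Set (X → Y)) (hH : H.Nonempty) (d : ℕ)
    (hshat : ¬ SLShatter 𝒮 H (d + 1)) :
    ∃ A : List (X × Set Y) → X → Y,
      ∀ (T : ℕ) (x : ℕ → X) (S : ℕ → Set Y),
        (∀ t < T, S t ∈ 𝒮) →
        (∃ h ∈ H, ∀ t < T, h (x t) ∈ S t) →
        ((Finset.range T).filter fun t => A (hist x S t) (x t) ∉ S t).card ≤ d := by
  have hrank : slRank 𝒮 H ≤ (d + 1 : ℕ) := slRank_le hshat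
  obtain ⟨A, hA⟩ := exists_isOptimalLearner hH (ne_top_of_le_ne_top (ENat.natCast_ne_top _) hrank)
  refine ⟨A, fun T x S hS hreal => Nat.lt_succ_iff.mp ?_⟩
  exact_mod_cast (hA.card_mistakes_lt_slRank hS hreal).trans_le hrank

open scoped Classical in
/-- If `ℋ` is nonempty and does not shatter any Set Littlestone tree of depth
`d+1`, then there is a deterministic online learner making at most `d` mistakes on every
realizable stream, of any length `T`. -/
theorem stmt3 {X Y : Type*} [MeasurableSpace Y]
    (𝒮 : Set (Set Y)) (h𝒮 : ∀ s ∈ 𝒮, MeasurableSet s)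
    (H : Set (X → Y)) (hH : H.Nonempty) (d : ℕ)
    (hshat : ¬ SLShatter 𝒮 H (d + 1)) :
    ∃ A : List (X × Set Y) → X → Y,
      ∀ (T : ℕ) (x : ℕ → X) (S : ℕ → Set Y),
        (∀ t < T, S t ∈ 𝒮) →
        (∃ h ∈ H, ∀ t < T, h (x t) ∈ S t) →
        ((Finset.range T).filter fun t => A (hist x S t) (x t) ∉ S t).card ≤ d :=
  stmt3_general 𝒮 H hH d hshat
end

section
/- Let (𝒴, σ(𝒴)) be a measurable space, 𝒮(𝒴) ⊆ σ(𝒴), 𝒳 a set, and ℋ ⊆ 𝒴^𝒳. Suppose ℋ shatters a 2-Set Littlestone tree of depth d ≥ 1, and let T = k·d for some odd k ∈ ℕ. Then for every randomized online learner 𝒜 there exists a stream (x_1,S_1),…,(x_T,S_T) ∈ (𝒳 × 𝒮(𝒴))^T on which the expected regret satisfies Σ_{t=1}^T μ̂_t(𝒴 \ S_t) − inf_{h ∈ ℋ} Σ_{t=1}^T 1{h(x_t) ∉ S_t} ≥ √(dT/8). -/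
/-!
The adversary walks down the tree, spending a block of `k` rounds at each node. In every round it
reveals one of the two disjoint sets `S 0`, `S 1` labeling the outgoing edges; a prediction `μ`
satisfies `μ (S 0)ᶜ + μ (S 1)ᶜ ≥ 1`, so fair coin flips cost the learner `1 / 2` per round. After
the block the adversary descends along the edge whose set was revealed more often, hence the
surviving hypotheses err only on the minority rounds: in expectation the block contributes
`𝔼|S_k| / 2` to the regret, where `S_k` is the simple random walk.

The coin flips are derandomized by the potential `s ↦ 𝔼|s + S_n|`, where `s` is the current
imbalance and `n` the number of rounds left in the block: it is the average of its two successors,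
so one of the two sets always does at least as well as the average.

Finally `𝔼|S_k| ≥ √(k/2)`. The increments of `n ↦ 𝔼|S_n|` are the return probabilities
`ℙ(S_n = 0)`, and summing them gives `𝔼|S_{2m+1}| = 𝔼|S_{2m+2}| = (2m+1) * centralBinom m / 4^m`,
whose square is at least `m + 1`.
-/

open MeasureTheory

/-! ### The simple random walk -/

section Walk

open Finset.HasAntidiagonal

/-- The transition operator of the simple random walk `S_n` on `ℤ`, so that
`(walkMean ^ n) f s = 𝔼 f(s + S_n)`. -/
noncomputable def walkMean : Module.End ℝ (ℤ → ℝ) where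
  toFun f s := (f (s + 1) + f (s - 1)) / 2
  map_add' f g := by ext s; simp only [Pi.add_apply]; ring
  map_smul' c f := by ext s; simp only [Pi.smul_apply, smul_eq_mul, RingHom.id_apply]; ring

lemma walkMean_apply (f : ℤ → ℝ) (s : ℤ) : walkMean f s = (f (s + 1) + f (s - 1)) / 2 := rfl

lemma walkMean_pow_apply (n : ℕ) (f : ℤ → ℝ) (s : ℤ) :
    (walkMean ^ n) f s =
      (∑ ij ∈ antidiagonal n, (n.choose ij.1 : ℝ) * f (s + ij.1 - ij.2)) / 2 ^ n := by
  induction n generalizing s with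
  | zero => simp
  | succ n ih =>
    rw [Finset.sum_antidiagonal_choose_succ_mul (fun i j => f (s + i - j)), pow_succ',
      Module.End.mul_apply, walkMean_apply, ih, ih, add_comm, ← add_div, div_div, ← pow_succ]
    congr 2
    · refine Finset.sum_congr rfl fun ij _ => ?_
      push_cast
      ring_nf
    · refine Finset.sum_congr rfl fun ij hij => ?_
      rw [Nat.choose_symm_of_eq_add (mem_antidiagonal.mp hij).symm]
      push_cast
      ring_nf

lemma walkMean_pow_two_mul_single (m : ℕ) :
    (walkMean ^ (2 * m)) (Pi.single 0 1) 0 = m.centralBinom / 4 ^ m := by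
  rw [walkMean_pow_apply, Finset.sum_eq_single (m, m), pow_mul]
  · norm_num [Nat.centralBinom]
  · rintro ⟨i, j⟩ hij hne
    have hsum : i + j = 2 * m := mem_antidiagonal.mp hij
    have : (0 : ℤ) + i - j ≠ 0 := fun h => hne (Prod.ext (by grind) (by grind))
    rw [Pi.single_eq_of_ne this, mul_zero]
  · intro h
    exact absurd (mem_antidiagonal.mpr (two_mul m).symm) h

lemma walkMean_pow_two_mul_add_one_single (m : ℕ) :
    (walkMean ^ (2 * m + 1)) (Pi.single 0 1) 0 = 0 := by
  rw [walkMean_pow_apply, Finset.sum_eq_zero, zero_div]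
  rintro ⟨i, j⟩ hij
  have hsum : i + j = 2 * m + 1 := mem_antidiagonal.mp hij
  have : (0 : ℤ) + i - j ≠ 0 := by omega
  rw [Pi.single_eq_of_ne this, mul_zero]

lemma walkMean_abs :
    walkMean (fun s => |(s : ℝ)|) = (fun s : ℤ => |(s : ℝ)|) + Pi.single 0 1 := by
  ext s
  rw [walkMean_apply, Pi.add_apply]
  rcases lt_trichotomy s 0 with hs | rfl | hs
  · have hs' : (s : ℝ) + 1 ≤ 0 := by exact_mod_cast hs
    rw [Pi.single_eq_of_ne hs.ne]
    push_cast
    rw [abs_of_nonpos hs', abs_of_nonpos (by linarith), abs_of_nonpos (by linarith)]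
    ring
  · norm_num
  · have hs' : (1 : ℝ) ≤ s := by exact_mod_cast hs
    rw [Pi.single_eq_of_ne hs.ne']
    push_cast
    rw [abs_of_nonneg (by linarith), abs_of_nonneg (by linarith), abs_of_nonneg (by linarith)]
    ring

/-- The expected distance `𝔼|s + S_n|` of the simple random walk started at `s` from the origin;
it serves as the potential of the adversary. -/
noncomputable def walkAbs (n : ℕ) : ℤ → ℝ := (walkMean ^ n) fun s => |(s : ℝ)|

lemma walkAbs_zero (s : ℤ) : walkAbs 0 s = |(s : ℝ)| := rfl

lemma walkAbs_succ (n : ℕ) (s : ℤ) :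
    walkAbs (n + 1) s = (walkAbs n (s + 1) + walkAbs n (s - 1)) / 2 := by
  rw [walkAbs, pow_succ', Module.End.mul_apply, walkMean_apply, walkAbs]

lemma walkAbs_succ_eq_add_single (n : ℕ) (s : ℤ) :
    walkAbs (n + 1) s = walkAbs n s + (walkMean ^ n) (Pi.single 0 1) s := by
  rw [walkAbs, pow_succ, Module.End.mul_apply, walkMean_abs, map_add, Pi.add_apply, walkAbs]

lemma walkAbs_two_mul_add_two (m : ℕ) : walkAbs (2 * m + 2) 0 = walkAbs (2 * m + 1) 0 := by
  rw [walkAbs_succ_eq_add_single, walkMean_pow_two_mul_add_one_single, add_zero]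

lemma centralBinom_succ_div_four_pow (m : ℕ) :
    ((m + 1).centralBinom / 4 ^ (m + 1) : ℝ) =
      (2 * m + 1) / (2 * m + 2) * (m.centralBinom / 4 ^ m) := by
  have h : ((m : ℝ) + 1) * (m + 1).centralBinom = 2 * (2 * m + 1) * m.centralBinom := by
    exact_mod_cast m.succ_mul_centralBinom_succ
  rw [pow_succ]
  field_simp
  linarith

lemma walkAbs_two_mul_add_one (m : ℕ) :
    walkAbs (2 * m + 1) 0 = (2 * m + 1) * (m.centralBinom / 4 ^ m) := by
  induction m with
  | zero => simp [walkAbs_succ, walkAbs_zero]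
  | succ m ih =>
    rw [walkAbs_succ_eq_add_single, walkMean_pow_two_mul_single, Nat.mul_succ,
      walkAbs_two_mul_add_two, ih, centralBinom_succ_div_four_pow]
    push_cast
    field_simp

lemma succ_le_sq_mul_centralBinom_div_four_pow (m : ℕ) :
    (m + 1 : ℝ) ≤ ((2 * m + 1) * (m.centralBinom / 4 ^ m)) ^ 2 := by
  induction m with
  | zero => simp
  | succ m ih =>
    calc ((m + 1 : ℕ) + 1 : ℝ)
        ≤ ((2 * m + 3) / (2 * m + 2)) ^ 2 * (m + 1) := by
          rw [div_pow, div_mul_eq_mul_div, le_div_iff₀ (by positivity)]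
          push_cast
          nlinarith
      _ ≤ ((2 * m + 3) / (2 * m + 2)) ^ 2 * ((2 * m + 1) * (m.centralBinom / 4 ^ m)) ^ 2 := by
          gcongr
      _ = _ := by
          rw [centralBinom_succ_div_four_pow]
          push_cast
          ring

lemma sqrt_half_le_walkAbs (k : ℕ) : √(k / 2) ≤ walkAbs k 0 := by
  have hodd (m : ℕ) : √(m + 1) ≤ walkAbs (2 * m + 1) 0 := by
    rw [walkAbs_two_mul_add_one]
    exact Real.sqrt_le_iff.mpr ⟨by positivity, succ_le_sq_mul_centralBinom_div_four_pow m⟩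
  obtain ⟨m, rfl | rfl⟩ := k.even_or_odd'
  · rcases m with _ | m
    · simp [walkAbs_zero]
    · rw [Nat.mul_succ, walkAbs_two_mul_add_two]
      refine (Real.sqrt_le_sqrt ?_).trans (hodd m)
      push_cast
      linarith
  · refine (Real.sqrt_le_sqrt ?_).trans (hodd m)
    push_cast
    linarith

end Walk

/-! ### Splitting the tree at its root -/

section Tree

variable {M : Type*} {d : ℕ}

lemma pref_cons_succ (a : M) (q : Fin d → M) (t : Fin d) :
    pref (Fin.cons a q : Fin (d + 1) → M) t.succ =
      (Fin.cons a (pref q t) : Fin (t + 1) → M) := by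
  funext j
  refine Fin.cases ?_ (fun j => ?_) j <;> rfl

lemma prefS_cons_succ (a : M) (q : Fin d → M) (t : Fin d) :
    prefS (Fin.cons a q : Fin (d + 1) → M) t.succ =
      (Fin.cons a (prefS q t) : Fin (t + 1 + 1) → M) := by
  funext j
  refine Fin.cases ?_ (fun j => ?_) j <;> rfl

end Tree

namespace PSLShatter

variable {X Y : Type*} {𝒮 : Set (Set Y)} {H : Set (X → Y)} {p d : ℕ}

lemma nonempty (hH : PSLShatter 𝒮 H p 0) : H.Nonempty := by
  obtain ⟨_, _, -, hpath⟩ := hH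
  obtain ⟨-, h, hh, -⟩ := hpath Fin.elim0
  exact ⟨h, hh⟩

lemma exists_root [NeZero p] (hH : PSLShatter 𝒮 H p (d + 1)) :
    ∃ (x : X) (S : Fin p → Set Y), (∀ i, S i ∈ 𝒮) ∧ ⋂ i, S i = ∅ ∧
      ∀ i, PSLShatter 𝒮 {h ∈ H | h x ∈ S i} p d := by
  obtain ⟨node, edge, hmem, hpath⟩ := hH
  obtain ⟨x, hx⟩ : ∃ x, ∀ q, node 0 q = x :=
    ⟨node 0 nofun, fun q => congrArg (node 0) (funext nofun)⟩
  obtain ⟨S, hS⟩ : ∃ S : Fin p → Set Y, ∀ q, edge 0 q = S (q 0) :=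
    ⟨fun i => edge 0 fun _ => i,
      fun q => congrArg (edge 0) (funext fun j => congrArg q (Subsingleton.elim (α := Fin 1) j 0))⟩
  refine ⟨x, S, fun i => hS (fun _ => i) ▸ hmem _ _, ?_, fun i => ?_⟩
  · rw [← (hpath 0).1 0]
    exact Set.iInter_congr fun i => (hS (Fin.snoc _ i)).symm
  · refine ⟨fun t q => node t.succ (Fin.cons i q : Fin (t + 1) → Fin p),
      fun t q => edge t.succ (Fin.cons i q : Fin (t + 1 + 1) → Fin p),
      fun t q => hmem _ _, fun q => ?_⟩
    obtain ⟨hinter, h, hh, hcons⟩ := hpath (Fin.cons i q)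
    refine ⟨fun t => ?_, h, ⟨hh, ?_⟩, fun t => ?_⟩
    · rw [← hinter t.succ, pref_cons_succ]
      exact Set.iInter_congr fun j =>
        congrArg (edge t.succ) (Fin.cons_snoc_eq_snoc_cons _ _ _)
    · exact hx (pref (Fin.cons i q) 0) ▸ hS (prefS (Fin.cons i q) 0) ▸ hcons 0
    · simpa only [pref_cons_succ, prefS_cons_succ] using hcons t.succ

end PSLShatter

/-! ### Regret on finite streams -/

section Regret

variable {X Y : Type*}

lemma hist_succ (x : ℕ → X) (S : ℕ → Set Y) (T : ℕ) :
    hist x S (T + 1) = hist x S T ++ [(x T, S T)] := by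
  simp [hist, List.range_succ]

lemma exists_hist_eq [Nonempty X] (L : List (X × Set Y)) :
    ∃ (x : ℕ → X) (S : ℕ → Set Y), hist x S L.length = L := by
  obtain ⟨x₀⟩ := ‹Nonempty X›
  refine ⟨fun t => (L.getD t (x₀, ∅)).1, fun t => (L.getD t (x₀, ∅)).2, ?_⟩
  exact List.ext_getElem (by simp [hist]) fun t _ ht => by simp [hist, ht]

variable [MeasurableSpace Y]

/-- A randomized online learner: a prediction for every history and new instance. -/
abbrev Learner (X Y : Type*) [MeasurableSpace Y] : Type _ :=
  List (X × Set Y) → X → ProbabilityMeasure Y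

/-- The learner that `A` becomes once it has seen the labeled examples `L`. -/
def Learner.after (A : Learner X Y) (L : List (X × Set Y)) : Learner X Y := fun L' => A (L ++ L')

/-- The expected regret of the learner `A` against the fixed hypothesis `h` on a finite stream. -/
noncomputable def regret (h : X → Y) : Learner X Y → List (X × Set Y) → ℝ
  | _, [] => 0
  | A, (x, S) :: L =>
    (A [] x).toMeasure.real Sᶜ - Sᶜ.indicator 1 (h x) + regret h (A.after [(x, S)]) L

lemma regret_append (h : X → Y) (A : Learner X Y) (L L' : List (X × Set Y)) :
    regret h A (L ++ L') = regret h A L + regret h (A.after L) L' := by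
  induction L generalizing A with
  | nil => simp only [regret, List.nil_append, zero_add]; rfl
  | cons p L ih =>
    simp only [List.cons_append, regret, ih, add_assoc]
    rfl

open scoped Classical in
lemma regret_hist (h : X → Y) (A : Learner X Y) (x : ℕ → X) (S : ℕ → Set Y) (T : ℕ) :
    regret h A (hist x S T) =
      (∑ t ∈ Finset.range T, (A (hist x S t) (x t)).toMeasure (S t)ᶜ).toReal -
        ((Finset.range T).filter fun t => h (x t) ∉ S t).card := by
  rw [ENNReal.toReal_sum fun t _ => measure_ne_top _ _, ← Finset.sum_boole,
    ← Finset.sum_sub_distrib]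
  induction T with
  | zero => rfl
  | succ T ih =>
    rw [Finset.sum_range_succ, ← ih, hist_succ, regret_append]
    simp [regret, Learner.after, Set.indicator_apply, Measure.real]

end Regret

/-! ### The adversary -/

section Adversary

variable {X Y : Type*}

/-- The direction `±1` in which revealing the set `S j` moves the imbalance of a block. -/
def edgeSign (j : Fin 2) : ℤ := ![1, -1] j

lemma indicator_compl_eq_edgeSign {S : Fin 2 → Set Y} (hS : ⋂ i, S i = ∅) {y : Y} {i : Fin 2}
    (hy : y ∈ S i) (j : Fin 2) :
    (S j)ᶜ.indicator (1 : Y → ℝ) y = (1 - edgeSign i * edgeSign j) / 2 := by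
  have hnot : ¬ (y ∈ S 0 ∧ y ∈ S 1) := fun h =>
    Set.eq_empty_iff_forall_notMem.mp hS y (Set.mem_iInter.mpr (Fin.forall_fin_two.mpr h))
  classical
  rw [Set.indicator_apply]
  fin_cases i <;> fin_cases j <;> simp_all [edgeSign]

variable [MeasurableSpace Y] {𝒮 : Set (Set Y)}

lemma one_le_sum_measureReal_compl {ι : Type*} [Fintype ι] (μ : Measure Y)
    [IsProbabilityMeasure μ] {S : ι → Set Y} (hS : ⋂ i, S i = ∅) : 1 ≤ ∑ i, μ.real (S i)ᶜ :=
  calc 1 = μ.real (⋃ i, (S i)ᶜ) := by rw [← Set.compl_iInter, hS, Set.compl_empty, probReal_univ]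
    _ ≤ ∑ i, μ.real (S i)ᶜ := measureReal_iUnion_fintype_le _

lemma exists_walkAbs_succ_le_measureReal_compl (μ : Measure Y) [IsProbabilityMeasure μ]
    {S : Fin 2 → Set Y} (hS : ⋂ i, S i = ∅) (n : ℕ) (s : ℤ) :
    ∃ j, walkAbs (n + 1) s / 2 ≤ μ.real (S j)ᶜ - 1 / 2 + walkAbs n (s + edgeSign j) / 2 := by
  by_contra! hlt
  have hsum := one_le_sum_measureReal_compl μ hS
  have h₀ := hlt 0
  have h₁ := hlt 1
  rw [Fin.sum_univ_two] at hsum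
  simp only [walkAbs_succ, edgeSign, Matrix.cons_val_zero, Matrix.cons_val_one,
    ← sub_eq_add_neg] at h₀ h₁
  linarith

/-- The edge `i` is the one along which the adversary descends after the block `L`; the term
`edgeSign i * s / 2` accounts for an imbalance `s` built up before `L`. -/
lemma exists_walkAbs_le_regret {S : Fin 2 → Set Y} (hmem : ∀ i, S i ∈ 𝒮) (hS : ⋂ i, S i = ∅)
    (A : Learner X Y) (x : X) (n : ℕ) (s : ℤ) :
    ∃ L : List (X × Set Y), L.length = n ∧ (∀ e ∈ L, e.2 ∈ 𝒮) ∧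
      ∃ i, ∀ h : X → Y, h x ∈ S i → walkAbs n s / 2 ≤ regret h A L + edgeSign i * s / 2 := by
  induction n generalizing A s with
  | zero =>
    refine ⟨[], rfl, by simp, ?_⟩
    rcases abs_choice (s : ℝ) with hs | hs
    · exact ⟨0, fun h _ => by simp [walkAbs_zero, regret, edgeSign, hs]⟩
    · exact ⟨1, fun h _ => by simp [walkAbs_zero, regret, edgeSign, hs]⟩
  | succ n ih =>
    obtain ⟨j, hj⟩ := exists_walkAbs_succ_le_measureReal_compl (A [] x).toMeasure hS n s
    obtain ⟨L, hlen, hL, i, hi⟩ := ih (A.after [(x, S j)]) (s + edgeSign j)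
    refine ⟨(x, S j) :: L, by rw [List.length_cons, hlen],
      List.forall_mem_cons.mpr ⟨hmem j, hL⟩, i, fun h hx => ?_⟩
    have hrest := hi h hx
    rw [regret, indicator_compl_eq_edgeSign hS hx]
    push_cast at hrest
    linarith

lemma PSLShatter.exists_le_regret {H : Set (X → Y)} {d : ℕ} (hH : PSLShatter 𝒮 H 2 d)
    (A : Learner X Y) (k : ℕ) :
    ∃ L : List (X × Set Y), L.length = k * d ∧ (∀ e ∈ L, e.2 ∈ 𝒮) ∧
      ∃ h ∈ H, d * (walkAbs k 0 / 2) ≤ regret h A L := by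
  induction d generalizing H A with
  | zero =>
    obtain ⟨h, hh⟩ := hH.nonempty
    exact ⟨[], rfl, by simp, h, hh, by simp [regret]⟩
  | succ d ih =>
    obtain ⟨x, S, hmem, hS, hsub⟩ := hH.exists_root
    obtain ⟨L, hLlen, hL, i, hi⟩ := exists_walkAbs_le_regret hmem hS A x k 0
    obtain ⟨L', hLlen', hL', h, ⟨hh, hx⟩, hreg⟩ := ih (hsub i) (A.after L)
    refine ⟨L ++ L', by rw [List.length_append, hLlen, hLlen', Nat.mul_succ, add_comm],
      List.forall_mem_append.mpr ⟨hL, hL'⟩, h, hh, ?_⟩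
    have hblock := hi h hx
    rw [regret_append]
    push_cast at hblock ⊢
    linarith

end Adversary

open scoped Classical in
theorem stmt8_general {X Y : Type*} [MeasurableSpace Y] {𝒮 : Set (Set Y)} {H : Set (X → Y)}
    {d : ℕ} (k : ℕ) (hd : 1 ≤ d) (hshat : PSLShatter 𝒮 H 2 d) (A : Learner X Y) :
    ∃ (x : ℕ → X) (S : ℕ → Set Y),
      (∀ t < k * d, S t ∈ 𝒮) ∧
      ∃ h ∈ H,
        √(d * (k * d) / 8) ≤
          (∑ t ∈ Finset.range (k * d), (A (hist x S t) (x t)).toMeasure (S t)ᶜ).toReal -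
            ((Finset.range (k * d)).filter fun t => h (x t) ∉ S t).card := by
  obtain ⟨L, hlen, hmem, h, hh, hreg⟩ := hshat.exists_le_regret A k
  have : Nonempty X := let ⟨node, _⟩ := hshat; ⟨node ⟨0, hd⟩ Fin.elim0⟩
  obtain ⟨x, S, hL⟩ := exists_hist_eq L
  rw [hlen] at hL
  refine ⟨x, S, fun t ht => hmem (x t, S t) ?_, h, hh, ?_⟩
  · rw [← hL]
    exact List.mem_map_of_mem (List.mem_range.mpr ht)
  · rw [← regret_hist, hL]
    calc √(d * (k * d) / 8) = √((d / 2) ^ 2 * (k / 2)) := by ring_nf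
      _ = d / 2 * √(k / 2) := by rw [Real.sqrt_mul (sq_nonneg _), Real.sqrt_sq (by positivity)]
      _ ≤ d / 2 * walkAbs k 0 := by gcongr; exact sqrt_half_le_walkAbs k
      _ = d * (walkAbs k 0 / 2) := by ring
      _ ≤ regret h A L := hreg

open scoped Classical in
/-- If `ℋ` shatters a 2-Set Littlestone tree of depth `d ≥ 1` and `T = k·d`
with `k` odd, then every randomized online learner suffers expected regret at least
`√(dT/8)` on some stream of length `T` (regret is witnessed by some `h ∈ ℋ`, which is the
best-in-hindsight hypothesis up to attainment of the infimum). -/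
theorem stmt8 {X Y : Type*} [MeasurableSpace Y]
    (𝒮 : Set (Set Y)) (h𝒮 : ∀ s ∈ 𝒮, MeasurableSet s)
    (H : Set (X → Y)) (d k : ℕ) (hd : 1 ≤ d) (hk : Odd k)
    (hshat : PSLShatter 𝒮 H 2 d)
    (A : List (X × Set Y) → X → ProbabilityMeasure Y) :
    ∃ (x : ℕ → X) (S : ℕ → Set Y),
      (∀ t < k * d, S t ∈ 𝒮) ∧
      ∃ h ∈ H,
        Real.sqrt ((d : ℝ) * (k * d) / 8) ≤
          (∑ t ∈ Finset.range (k * d), (A (hist x S t) (x t)).toMeasure ((S t)ᶜ)).toReal -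
            (((Finset.range (k * d)).filter fun t => h (x t) ∉ S t).card : ℝ) :=
  stmt8_general k hd hshat A
end

section
/- Let (𝒴, σ(𝒴)) be a measurable space, 𝒮(𝒴) ⊆ σ(𝒴), 𝒳 a set, and ℋ ⊆ 𝒴^𝒳. Let p ≥ 2 and γ ∈ [0, 1/p]. If ℋ shatters a p-Set Littlestone tree of depth d, then ℋ γ-shatters a measure tree of depth d. -/
open MeasureTheory

/-!
Call the edge sets at a node `e₁, …, eₚ`. As their intersection is empty, their complements cover
`Y`, so under any probability measure some complement has mass at least `1 / p` and the
corresponding `eᵢ` has mass at most `1 - 1 / p`. Answering each measure on a path by such an index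
`i`, while walking down the `p`-Set Littlestone tree, translates the path of measures into a path
in `[p]`. The translation is causal, so the labels of the given tree may be read off along
translated paths, and they form a measure tree that is shattered for `γ = 1 / p`, hence for every
smaller `γ`.
-/

section Measure

variable {ι α : Type*} [Fintype ι] [Nonempty ι]

lemma exists_measure_iUnion_div_card_le {F : Type*} [FunLike F (Set α) ENNReal]
    [OuterMeasureClass F α] (μ : F) (s : ι → Set α) :
    ∃ i, μ (⋃ j, s j) / Fintype.card ι ≤ μ (s i) := by
  have hsum : ∑ _i : ι, μ (⋃ j, s j) / Fintype.card ι ≤ ∑ i, μ (s i) := calc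
    ∑ _i : ι, μ (⋃ j, s j) / Fintype.card ι
        = Fintype.card ι * (μ (⋃ j, s j) / Fintype.card ι) := by
      rw [Finset.sum_const, Finset.card_univ, nsmul_eq_mul]
    _ ≤ μ (⋃ j, s j) := ENNReal.mul_div_le
    _ ≤ ∑ i, μ (s i) := measure_iUnion_fintype_le μ s
  obtain ⟨i, -, hi⟩ := ENNReal.exists_le_of_sum_le Finset.univ_nonempty hsum
  exact ⟨i, hi⟩

lemma exists_measure_le_sub_div_card_of_iInter_eq_empty [MeasurableSpace α]
    (μ : Measure α) [IsFiniteMeasure μ] {s : ι → Set α} (hs : ∀ i, NullMeasurableSet (s i) μ)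
    (hempty : ⋂ i, s i = ∅) :
    ∃ i, μ (s i) ≤ μ Set.univ - μ Set.univ / Fintype.card ι := by
  obtain ⟨i, hi⟩ := exists_measure_iUnion_div_card_le μ fun i => (s i)ᶜ
  rw [← Set.compl_iInter, hempty, Set.compl_empty] at hi
  refine ⟨i, ?_⟩
  calc μ (s i) = μ Set.univ - μ (s i)ᶜ := by
        rw [← measure_compl₀ (hs i).compl (measure_ne_top μ _), compl_compl]
    _ ≤ μ Set.univ - μ Set.univ / Fintype.card ι := tsub_le_tsub_left hi _

end Measure

section Path

variable {M Q : Type*} {d : ℕ}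

lemma pref_surjective [Nonempty M] (t : Fin d) :
    Function.Surjective fun y : Fin d → M => pref y t :=
  (Fin.castLE_injective t.isLt.le).surjective_comp_right

/-- The path of replies to a path of moves, under the strategy `c` that chooses the reply to the
move at time `t` from the earlier replies and that move. It translates paths of measures into
paths in `[p]`, and is defined for all lengths `n ≤ d` so that it also applies to the histories
by which the nodes and edges of a tree are indexed. -/
def replyPath (c : ∀ t : Fin d, (Fin t → Q) → M → Q) : ∀ n ≤ d, (Fin n → M) → Fin n → Q
  | 0, _, _ => Fin.elim0
  | n + 1, hn, m =>
    let q := replyPath c n (Nat.le_of_succ_le hn) (Fin.init m)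
    Fin.snoc q (c ⟨n, hn⟩ q (m (Fin.last n)))

lemma take_replyPath (c : ∀ t : Fin d, (Fin t → Q) → M → Q) {k n : ℕ} (hkn : k ≤ n)
    (hn : n ≤ d) (m : Fin n → M) :
    Fin.take k hkn (replyPath c n hn m) = replyPath c k (hkn.trans hn) (Fin.take k hkn m) := by
  induction hkn with
  | refl => rfl
  | @step n hkn ih =>
    rw [← Fin.take_init k hkn, replyPath, Fin.init_snoc, ih, Fin.take_init]

lemma pref_replyPath (c : ∀ t : Fin d, (Fin t → Q) → M → Q) (m : Fin d → M) (t : Fin d) :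
    pref (replyPath c d le_rfl m) t = replyPath c t t.isLt.le (pref m t) :=
  take_replyPath c t.isLt.le le_rfl m

lemma prefS_replyPath (c : ∀ t : Fin d, (Fin t → Q) → M → Q) (m : Fin d → M) (t : Fin d) :
    prefS (replyPath c d le_rfl m) t = replyPath c (t + 1) t.isLt (prefS m t) :=
  take_replyPath c t.isLt le_rfl m

lemma replyPath_prefS_eq_snoc (c : ∀ t : Fin d, (Fin t → Q) → M → Q) (m : Fin d → M) (t : Fin d) :
    replyPath c (t + 1) t.isLt (prefS m t) =
      Fin.snoc (replyPath c t t.isLt.le (pref m t))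
        (c t (replyPath c t t.isLt.le (pref m t)) (m t)) :=
  rfl

end Path

section Shatter

variable {X Y : Type*} [MeasurableSpace Y] {𝒮 : Set (Set Y)} {H : Set (X → Y)} {d : ℕ}

lemma MSShatter.anti {γ γ' : ℝ} (hγ : γ ≤ γ') (h : MSShatter 𝒮 H γ' d) :
    MSShatter 𝒮 H γ d := by
  obtain ⟨node, edge, hedge, hpath⟩ := h
  refine ⟨node, edge, hedge, fun μ => ⟨fun t => ?_, (hpath μ).2⟩⟩
  have ht := (hpath μ).1 t
  split_ifs at ht ⊢ with hγ0 hγ'0 hγ'0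
  · exact ht
  · have hγ' : 0 < γ' := (hγ0 ▸ hγ).lt_of_ne' hγ'0
    exact ht.trans_lt (ENNReal.sub_lt_self ENNReal.one_ne_top one_ne_zero
      (ENNReal.ofReal_pos.2 hγ').ne')
  · rw [ENNReal.ofReal_of_nonpos (hγ'0 ▸ hγ), tsub_zero]
    exact ht.le
  · exact ht.trans (tsub_le_tsub_left (ENNReal.ofReal_le_ofReal hγ) 1)

lemma PSLShatter.msShatter_one_div {p : ℕ} [NeZero p] (h𝒮 : ∀ s ∈ 𝒮, MeasurableSet s)
    (h : PSLShatter 𝒮 H p d) : MSShatter 𝒮 H (1 / p) d := by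
  obtain ⟨node, edge, hedge, hpath⟩ := h
  have hempty (t : Fin d) (qs : Fin t → Fin p) : ⋂ i, edge t (Fin.snoc qs i) = ∅ := by
    obtain ⟨q, rfl⟩ := pref_surjective t qs
    exact (hpath q).1 t
  choose c hc using fun (t : Fin d) (q : Fin t → Fin p) (m : ProbabilityMeasure Y) =>
    exists_measure_le_sub_div_card_of_iInter_eq_empty m.toMeasure
      (fun i => (h𝒮 _ (hedge t (Fin.snoc q i))).nullMeasurableSet) (hempty t q)
  refine ⟨fun t m => node t (replyPath c t t.isLt.le m),
    fun t m => edge t (replyPath c (t + 1) t.isLt m), fun t _ => hedge t _,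
    fun μ => ⟨fun t => ?_, ?_⟩⟩
  · have hp : (0 : ℝ) < p := Nat.cast_pos.2 (NeZero.pos p)
    rw [if_neg (one_div_pos.2 hp).ne']
    simpa only [replyPath_prefS_eq_snoc, measure_univ, Fintype.card_fin,
      ENNReal.ofReal_div_of_pos hp, ENNReal.ofReal_one, ENNReal.ofReal_natCast] using
      hc t (replyPath c t t.isLt.le (pref μ t)) (μ t)
  · simp only [← pref_replyPath, ← prefS_replyPath]
    exact (hpath (replyPath c d le_rfl μ)).2

end Shatter

/-- For `p ≥ 2` and `γ ∈ [0, 1/p]`, if `ℋ` shatters a `p`-Set Littlestone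
tree of depth `d`, then `ℋ` `γ`-shatters a measure tree of depth `d`. -/
theorem stmt9 {X Y : Type*} [MeasurableSpace Y]
    (𝒮 : Set (Set Y)) (h𝒮 : ∀ s ∈ 𝒮, MeasurableSet s)
    (H : Set (X → Y)) (p : ℕ) (hp : 2 ≤ p)
    (γ : ℝ) (hγ0 : 0 ≤ γ) (hγ1 : γ ≤ 1 / p) (d : ℕ)
    (hshat : PSLShatter 𝒮 H p d) :
    MSShatter 𝒮 H γ d := by
  have : NeZero p := ⟨by lia⟩
  exact (hshat.msShatter_one_div h𝒮).anti hγ1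
end

section
/- Let (𝒴, σ(𝒴)) be a measurable space in which every singleton {y} is measurable, let 𝒮(𝒴) ⊆ σ(𝒴), 𝒳 a set, and ℋ ⊆ 𝒴^𝒳. Let γ ∈ [0,1]. If ℋ γ-shatters a measure tree of depth d, then ℋ shatters a Set Littlestone tree of depth d. -/
open MeasureTheory

/-- A tree of depth `d` shattered by `H`, with branches indexed by an arbitrary type `M` and edge
sets in `𝒮`. The relation `R m s` says which sets `s` may label an edge taken along `m`, so that
Set Littlestone trees and measure trees are the cases `M = Y` and `M = ProbabilityMeasure Y`. -/
def ShattersTree {M X Y : Type*} (𝒮 : Set (Set Y)) (H : Set (X → Y)) (R : M → Set Y → Prop)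
    (d : ℕ) : Prop :=
  ∃ (node : ∀ t : Fin d, (Fin (t : ℕ) → M) → X)
    (edge : ∀ t : Fin d, (Fin ((t : ℕ) + 1) → M) → Set Y),
    (∀ (t : Fin d) (ms : Fin ((t : ℕ) + 1) → M), edge t ms ∈ 𝒮) ∧
    ∀ m : Fin d → M,
      (∀ t : Fin d, R (m t) (edge t (prefS m t))) ∧
      ∃ h ∈ H, ∀ t : Fin d, h (node t (pref m t)) ∈ edge t (prefS m t)

/-- The admissibility condition on the edges of a measure tree: `s` misses mass at least `γ` of
the probability measure `μ`, or some positive mass when `γ = 0`. On a nonmeasurable `s` the value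
`μ s` is an outer measure, and for `γ > 1` the bound `1 - γ` is truncated to `0`. -/
def MissesMass {Y : Type*} [MeasurableSpace Y] (γ : ℝ) (μ : ProbabilityMeasure Y) (s : Set Y) :
    Prop :=
  if γ = 0 then μ.toMeasure s < 1 else μ.toMeasure s ≤ 1 - ENNReal.ofReal γ

section

variable {M N X Y : Type*} {𝒮 : Set (Set Y)} {H : Set (X → Y)} {d : ℕ}

theorem ShattersTree.comap {R : M → Set Y → Prop} {R' : N → Set Y → Prop}
    (hR : ShattersTree 𝒮 H R d) (f : N → M) (hf : ∀ n s, R (f n) s → R' n s) :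
    ShattersTree 𝒮 H R' d := by
  obtain ⟨node, edge, edge_mem, shatters⟩ := hR
  refine ⟨fun t ns => node t (f ∘ ns), fun t ns => edge t (f ∘ ns),
    fun t ns => edge_mem t (f ∘ ns), fun n => ?_⟩
  -- Taking prefixes commutes definitionally with composition by `f`.
  obtain ⟨admissible, consistent⟩ := shatters (f ∘ n)
  exact ⟨fun t => hf _ _ (admissible t), consistent⟩

theorem slShatter_iff_shattersTree :
    SLShatter 𝒮 H d ↔ ShattersTree 𝒮 H (fun y s => y ∉ s) d :=
  Iff.rfl

variable [MeasurableSpace Y] {γ : ℝ}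

theorem msShatter_iff_shattersTree :
    MSShatter 𝒮 H γ d ↔ ShattersTree 𝒮 H (MissesMass γ) d :=
  Iff.rfl

theorem MissesMass.measure_lt_one {μ : ProbabilityMeasure Y} {s : Set Y}
    (h : MissesMass γ μ s) (hγ : 0 ≤ γ) : μ.toMeasure s < 1 := by
  unfold MissesMass at h
  split_ifs at h with hγ0
  · exact h
  · have hpos : 0 < ENNReal.ofReal γ := ENNReal.ofReal_pos.2 (hγ.lt_of_ne' hγ0)
    exact h.trans_lt (ENNReal.sub_lt_self ENNReal.one_ne_top one_ne_zero hpos.ne')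

theorem MissesMass.notMem_of_diracProba {y : Y} {s : Set Y}
    (h : MissesMass γ (diracProba y) s) (hγ : 0 ≤ γ) : y ∉ s :=
  fun hy => (h.measure_lt_one hγ).ne (diracProba_toMeasure_apply_of_mem hy)

end

theorem stmt10_general {X Y : Type*} [MeasurableSpace Y] (𝒮 : Set (Set Y)) (H : Set (X → Y))
    (γ : ℝ) (hγ0 : 0 ≤ γ) (d : ℕ) (hshat : MSShatter 𝒮 H γ d) : SLShatter 𝒮 H d :=
  slShatter_iff_shattersTree.2 <|
    (msShatter_iff_shattersTree.1 hshat).comap diracProba fun _ _ h => h.notMem_of_diracProba hγ0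

/-- If singletons of `𝒴` are measurable and `γ ∈ [0,1]`, then `γ`-shattering
of a measure tree of depth `d` by `ℋ` implies shattering of a Set Littlestone tree of
depth `d` by `ℋ`. -/
theorem stmt10 {X Y : Type*} [MeasurableSpace Y] [MeasurableSingletonClass Y]
    (𝒮 : Set (Set Y)) (h𝒮 : ∀ s ∈ 𝒮, MeasurableSet s)
    (H : Set (X → Y))
    (γ : ℝ) (hγ0 : 0 ≤ γ) (hγ1 : γ ≤ 1) (d : ℕ)
    (hshat : MSShatter 𝒮 H γ d) :
    SLShatter 𝒮 H d :=
  stmt10_general 𝒮 H γ hγ0 d hshat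
end

section
/- Let (𝒴, σ(𝒴)) be a measurable space, 𝒮(𝒴) ⊆ σ(𝒴), 𝒳 a set, and ℋ ⊆ 𝒴^𝒳. Suppose the Helly number of 𝒮(𝒴) is finite and equals p. If ℋ shatters a Set Littlestone tree of depth d, then ℋ shatters a p-Set Littlestone tree of depth d. -/
/-!
Every `y : Y` is missing from the edge label of the child `y` of a node, so the labels of all the
edges leaving that node have empty intersection, and the Helly property selects `p` of these edges
(possibly repeated) whose labels already have empty intersection. Keeping only the selected
children at every node maps `[p]^d` to paths of the original tree, compatibly with prefixes, so
both the labels and the consistent hypotheses are inherited.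
-/

open MeasureTheory

/-- `𝒮` has the Helly property at `p`: every subcollection of `𝒮` with empty intersection
contains a subcollection of size at most `p` with empty intersection. The Helly number of
`𝒮` is the smallest such `p`. -/
def HellyAt {Y : Type*} (𝒮 : Set (Set Y)) (p : ℕ) : Prop :=
  ∀ C ⊆ 𝒮, ⋂₀ C = ∅ → ∃ C' ⊆ C, C'.Finite ∧ C'.ncard ≤ p ∧ ⋂₀ C' = ∅

theorem prefS_surjective {M : Type*} {d : ℕ} (t : Fin d) :
    Function.Surjective fun y : Fin d → M => prefS y t := by
  intro ys
  refine ⟨fun i => ys (Fin.clamp i t), funext fun i => congrArg ys (Fin.ext ?_)⟩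
  exact min_eq_left (Nat.lt_succ_iff.mp i.isLt)

section LiftPath

variable {M ι : Type*} (c : ∀ n : ℕ, (Fin n → M) → ι → M)

/-- The path in the tree with branching `M` obtained from a path `q` of indices, where
`c n ys i` is the `i`-th selected child of the node reached by `ys`. It turns paths of a pruned
tree into paths of the original one. The selection `c` is given at all depths, so that one
selection serves paths of every length. -/
def liftPath : ∀ {n : ℕ}, (Fin n → ι) → Fin n → M
  | 0, _ => Fin.elim0
  | n + 1, q =>
    Fin.snoc (α := fun _ => M) (liftPath (Fin.init q))
      (c n (liftPath (Fin.init q)) (q (Fin.last n)))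

theorem liftPath_snoc {n : ℕ} (q : Fin n → ι) (i : ι) :
    liftPath c (Fin.snoc (α := fun _ => ι) q i) =
      Fin.snoc (α := fun _ => M) (liftPath c q) (c n (liftPath c q) i) := by
  simp only [liftPath, Fin.init_snoc, Fin.snoc_last]

theorem init_liftPath {n : ℕ} (q : Fin (n + 1) → ι) :
    Fin.init (liftPath c q) = liftPath c (Fin.init q) :=
  Fin.init_snoc _ _

theorem take_liftPath {m n : ℕ} (hmn : m ≤ n) (q : Fin n → ι) :
    Fin.take m hmn (liftPath c q) = liftPath c (Fin.take m hmn q) := by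
  induction n, hmn using Nat.le_induction with
  | base => rfl
  | succ n hmn ih =>
    calc Fin.take m (hmn.trans n.le_succ) (liftPath c q)
        = Fin.take m hmn (Fin.init (liftPath c q)) := rfl
      _ = Fin.take m hmn (liftPath c (Fin.init q)) := by rw [init_liftPath]
      _ = liftPath c (Fin.take m hmn (Fin.init q)) := ih _

theorem pref_liftPath {d : ℕ} (q : Fin d → ι) (t : Fin d) :
    pref (liftPath c q) t = liftPath c (pref q t) :=
  take_liftPath c t.isLt.le q

theorem prefS_liftPath {d : ℕ} (q : Fin d → ι) (t : Fin d) :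
    prefS (liftPath c q) t = liftPath c (prefS q t) :=
  take_liftPath c (Nat.succ_le_of_lt t.isLt) q

end LiftPath

theorem exists_fin_range_eq {α : Type*} {s : Set α} {p : ℕ} (hfin : s.Finite)
    (hne : s.Nonempty) (hcard : s.ncard ≤ p) : ∃ f : Fin p → α, Set.range f = s := by
  have : Finite s := hfin
  have : Nonempty s := hne.to_subtype
  let e : s ↪ Fin p := (Finite.equivFin s).toEmbedding.trans (Fin.castLEEmb hcard)
  refine ⟨fun i => (Function.invFun e i : s), ?_⟩
  rw [Set.range_comp' Subtype.val, (Function.invFun_surjective e.injective).range_eq,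
    Set.image_univ, Subtype.range_coe]

namespace HellyAt

variable {Y : Type*} {𝒮 : Set (Set Y)} {p : ℕ}

theorem of_isEmpty [IsEmpty Y] (𝒮 : Set (Set Y)) (p : ℕ) : HellyAt 𝒮 p :=
  fun C _ _ => ⟨∅, C.empty_subset, Set.finite_empty, by simp, Set.eq_empty_of_isEmpty _⟩

theorem exists_iInter_eq_empty [Nonempty Y] {ι : Type*} (hHelly : HellyAt 𝒮 p) {E : ι → Set Y}
    (hE : ∀ i, E i ∈ 𝒮) (hempty : ⋂ i, E i = ∅) :
    ∃ c : Fin p → ι, ⋂ j, E (c j) = ∅ := by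
  obtain ⟨C, hCE, hfin, hcard, hC⟩ :=
    hHelly (Set.range E) (Set.range_subset_iff.2 hE) (by rwa [Set.sInter_range])
  have hne : C.Nonempty := Set.nonempty_iff_ne_empty.2 <| by
    rintro rfl
    exact Set.empty_ne_univ (hC.symm.trans Set.sInter_empty)
  obtain ⟨f, rfl⟩ := exists_fin_range_eq hfin hne hcard
  choose c hc using Set.range_subset_iff.1 hCE
  exact ⟨c, by simpa only [hc, Set.sInter_range] using hC⟩

theorem exists_selection [Nonempty Y] (hHelly : HellyAt 𝒮 p) {d : ℕ}
    {edge : ∀ t : Fin d, (Fin ((t : ℕ) + 1) → Y) → Set Y} (hedge : ∀ t ys, edge t ys ∈ 𝒮)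
    (hmiss : ∀ t ys, ys (Fin.last t) ∉ edge t ys) :
    ∃ c : ∀ n : ℕ, (Fin n → Y) → Fin p → Y, ∀ (t : Fin d) (ys : Fin (t : ℕ) → Y),
      ⋂ i, edge t (Fin.snoc (α := fun _ => Y) ys (c t ys i)) = ∅ := by
  have hempty (t : Fin d) (ys : Fin (t : ℕ) → Y) :
      ⋂ y, edge t (Fin.snoc (α := fun _ => Y) ys y) = ∅ :=
    Set.eq_empty_of_forall_notMem fun y hy =>
      hmiss t (Fin.snoc ys y) <| by simpa only [Fin.snoc_last] using Set.mem_iInter.1 hy y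
  choose c hc using fun t ys => hHelly.exists_iInter_eq_empty (fun y => hedge t _) (hempty t ys)
  refine ⟨fun n ys i => if hn : n < d then c ⟨n, hn⟩ ys i else Classical.arbitrary Y,
    fun t ys => ?_⟩
  simpa only [t.isLt, dite_true] using hc t ys

end HellyAt

namespace SLShatter

variable {X Y : Type*} {𝒮 : Set (Set Y)} {H : Set (X → Y)} {p d : ℕ}

theorem pslShatter [Nonempty Y] (hHelly : HellyAt 𝒮 p) (hshat : SLShatter 𝒮 H d) :
    PSLShatter 𝒮 H p d := by
  obtain ⟨node, edge, hedge, hpath⟩ := hshat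
  have hmiss (t : Fin d) (ys : Fin ((t : ℕ) + 1) → Y) : ys (Fin.last t) ∉ edge t ys := by
    obtain ⟨y, rfl⟩ := prefS_surjective t ys
    exact (hpath y).1 t
  obtain ⟨c, hc⟩ := hHelly.exists_selection hedge hmiss
  refine ⟨fun t qs => node t (liftPath c qs), fun t qs => edge t (liftPath c qs),
    fun t _ => hedge t _, fun q => ⟨fun t => ?_, ?_⟩⟩
  · simpa only [liftPath_snoc] using hc t (liftPath c (pref q t))
  · obtain ⟨h, hH, hh⟩ := (hpath (liftPath c q)).2
    exact ⟨h, hH, fun t => by simpa only [pref_liftPath, prefS_liftPath] using hh t⟩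

theorem pslShatter_zero (hshat : SLShatter 𝒮 H d) : PSLShatter 𝒮 H 0 d := by
  obtain ⟨node, _, _, hpath⟩ := hshat
  cases d with
  | zero =>
    obtain ⟨-, h, hH, -⟩ := hpath Fin.elim0
    exact ⟨fun t => t.elim0, fun t => t.elim0, fun t => t.elim0,
      fun _ => ⟨fun t => t.elim0, h, hH, fun t => t.elim0⟩⟩
  | succ d =>
    exact ⟨fun _ _ => node 0 Fin.elim0, fun _ qs => (qs 0).elim0, fun _ qs => (qs 0).elim0,
      fun q => (q 0).elim0⟩

end SLShatter

theorem stmt11_general {X Y : Type*} {𝒮 : Set (Set Y)} {H : Set (X → Y)} {p d : ℕ}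
    (hHelly : HellyAt 𝒮 p) (hY : 0 < p → Nonempty Y) (hshat : SLShatter 𝒮 H d) :
    PSLShatter 𝒮 H p d := by
  rcases p.eq_zero_or_pos with rfl | hp
  · exact hshat.pslShatter_zero
  · have := hY hp
    exact hshat.pslShatter hHelly

/-- If the Helly number of `𝒮(𝒴)` is finite and equals `p`, then shattering
of a Set Littlestone tree of depth `d` by `ℋ` implies shattering of a `p`-Set Littlestone
tree of depth `d` by `ℋ`. -/
theorem stmt11 {X Y : Type*} [MeasurableSpace Y]
    (𝒮 : Set (Set Y)) (h𝒮 : ∀ s ∈ 𝒮, MeasurableSet s)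
    (H : Set (X → Y)) (p : ℕ)
    (hHelly : HellyAt 𝒮 p) (hmin : ∀ q < p, ¬ HellyAt 𝒮 q)
    (d : ℕ) (hshat : SLShatter 𝒮 H d) :
    PSLShatter 𝒮 H p d :=
  stmt11_general hHelly (fun hp => not_isEmpty_iff.1 fun _ => hmin 0 hp (.of_isEmpty 𝒮 0)) hshat
end

section
/- Fix K ∈ ℕ with K ≥ 2. Let 𝒴 be the set of permutations of [K] and, for r ∈ {0,1}^K, let 𝒴(r) = {π ∈ 𝒴 : ℓ(π,r) = 0}, where ℓ is the 0-1 ranking loss. Then the Helly number of the collection {𝒴(r) : r ∈ {0,1}^K} equals 2. In particular: (i) for any Q ∈ ℕ and any r_1,…,r_Q ∈ {0,1}^K, if 𝒴(r_i) ∩ 𝒴(r_j) ≠ ∅ for all i,j ∈ [Q], then ⋂_{i=1}^Q 𝒴(r_i) ≠ ∅; and (ii) there exist r, r' ∈ {0,1}^K with 𝒴(r) ∩ 𝒴(r') = ∅. -/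
/-- The set of correct rankings for a binary relevance vector `r`: a permutation `π` of
`[K]` (where `π i` is the rank of label `i`, smaller rank = more relevant) is correct iff
whenever label `i` is irrelevant and label `j` is relevant, `j` is ranked above `i`. -/
def rankSet (K : ℕ) (r : Fin K → Bool) : Set (Equiv.Perm (Fin K)) :=
  {π | ∀ i j : Fin K, r i = false → r j = true → π j < π i}

/-!
Order `{0,1}^K` coordinatewise. Two relevance vectors with a common correct ranking are comparable,
since otherwise two labels would have to be ranked in both orders. Conversely, a chain of relevance
vectors has a common correct ranking: rank the labels by the number of vectors of the chain that
declare them irrelevant. So pairwise intersection already forces a common ranking, while a Helly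
number below `2` is excluded by two disjoint members of the collection, each of them nonempty.
-/

section Helly

variable {Y : Type*} {𝒮 : Set (Set Y)}

lemma hellyAt_two_of_sInter_nonempty
    (h : ∀ C ⊆ 𝒮, (∀ S ∈ C, ∀ T ∈ C, (S ∩ T).Nonempty) → (⋂₀ C).Nonempty) : HellyAt 𝒮 2 := by
  intro C hC hempty
  by_contra! hfew
  refine (h C hC fun S hS T hT => ?_).ne_empty hempty
  rw [← Set.sInter_pair]
  exact hfew {S, T} (Set.pair_subset hS hT) (Set.toFinite _)
    ((Set.ncard_insert_le S {T}).trans (by simp))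

lemma not_hellyAt_of_disjoint {S T : Set Y} (hS : S ∈ 𝒮) (hT : T ∈ 𝒮) (hSne : S.Nonempty)
    (hTne : T.Nonempty) (hST : Disjoint S T) {q : ℕ} (hq : q < 2) : ¬ HellyAt 𝒮 q := by
  intro hHelly
  obtain ⟨C, hC, hfin, hcard, hempty⟩ :=
    hHelly {S, T} (Set.pair_subset hS hT) (by rw [Set.sInter_pair, hST.inter_eq])
  have : Finite C := hfin.to_subtype
  have hsub : C.Subsingleton := Set.ncard_le_one_iff_subsingleton.mp (by lia)
  rcases hsub.eq_empty_or_singleton with rfl | ⟨U, rfl⟩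
  · have : Nonempty Y := hSne.to_type
    exact Set.univ_nonempty.ne_empty (by rwa [Set.sInter_empty] at hempty)
  · rw [Set.sInter_singleton] at hempty
    rcases hC rfl with rfl | rfl
    exacts [hSne.ne_empty hempty, hTne.ne_empty hempty]

end Helly

lemma exists_perm_lt_of_lt {n : ℕ} {α : Type*} [LinearOrder α] (f : Fin n → α) :
    ∃ π : Equiv.Perm (Fin n), ∀ i j, f i < f j → π i < π j := by
  refine ⟨(Tuple.sort f).symm, fun i j hij => ?_⟩
  exact (Tuple.monotone_sort f).reflect_lt (by simpa using hij)

section RankSet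

variable {K : ℕ}

lemma le_or_ge_of_inter_rankSet_nonempty {r s : Fin K → Bool}
    (h : (rankSet K r ∩ rankSet K s).Nonempty) : r ≤ s ∨ s ≤ r := by
  obtain ⟨π, hr, hs⟩ := h
  by_contra! ⟨hrs, hsr⟩
  simp only [Pi.le_def, not_forall, not_le, Bool.lt_iff] at hrs hsr
  obtain ⟨i, hsi, hri⟩ := hrs
  obtain ⟨j, hrj, hsj⟩ := hsr
  exact lt_asymm (hr j i hrj hri) (hs i j hsi hsj)

lemma biInter_rankSet_nonempty_of_isChain {R : Set (Fin K → Bool)} (hR : IsChain (· ≤ ·) R) :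
    (⋂ r ∈ R, rankSet K r).Nonempty := by
  classical
  let irrelevantAt (i : Fin K) : Finset (Fin K → Bool) := {r | r ∈ R ∧ r i = false}
  obtain ⟨π, hπ⟩ := exists_perm_lt_of_lt fun i => (irrelevantAt i).card
  refine ⟨π, Set.mem_iInter₂.mpr fun r hr i j hi hj => hπ j i (Finset.card_lt_card ?_)⟩
  have hsub : irrelevantAt j ⊆ irrelevantAt i := by
    simp only [irrelevantAt, Finset.subset_iff, Finset.mem_filter_univ]
    rintro s ⟨hs, hsj⟩
    have hsr : s ≤ r := (hR.total hs hr).resolve_right fun hrs => by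
      simpa [Bool.le_iff_imp, hj, hsj] using hrs j
    exact ⟨hs, by simpa [Bool.le_iff_imp, hi] using hsr i⟩
  exact (Finset.ssubset_iff_of_subset hsub).mpr
    ⟨r, by simp [irrelevantAt, hr, hi], by simp [irrelevantAt, hj]⟩

lemma rankSet_nonempty (r : Fin K → Bool) : (rankSet K r).Nonempty := by
  simpa using biInter_rankSet_nonempty_of_isChain (IsChain.singleton (a := r))

lemma iInter_rankSet_nonempty {ι : Sort*} {r : ι → Fin K → Bool}
    (h : ∀ i j, (rankSet K (r i) ∩ rankSet K (r j)).Nonempty) :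
    (⋂ i, rankSet K (r i)).Nonempty := by
  have hchain : IsChain (· ≤ ·) (Set.range r) := by
    rintro _ ⟨i, rfl⟩ _ ⟨j, rfl⟩ -
    exact le_or_ge_of_inter_rankSet_nonempty (h i j)
  simpa only [Set.biInter_range] using biInter_rankSet_nonempty_of_isChain hchain

lemma hellyAt_two_range_rankSet (K : ℕ) : HellyAt (Set.range (rankSet K)) 2 := by
  refine hellyAt_two_of_sInter_nonempty fun C hC hpair => ?_
  obtain ⟨R, rfl⟩ := Set.subset_range_iff_exists_image_eq.mp hC
  rw [Set.sInter_image, Set.biInter_eq_iInter]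
  exact iInter_rankSet_nonempty fun r s : R =>
    hpair _ (Set.mem_image_of_mem _ r.2) _ (Set.mem_image_of_mem _ s.2)

lemma disjoint_rankSet_decide_eq {a b : Fin K} (hab : a ≠ b) :
    Disjoint (rankSet K fun i => decide (i = a)) (rankSet K fun i => decide (i = b)) := by
  rw [Set.disjoint_iff_inter_eq_empty, ← Set.not_nonempty_iff_eq_empty]
  intro h
  rcases le_or_ge_of_inter_rankSet_nonempty h with hle | hle
  · simpa [Bool.le_iff_imp, hab] using hle a
  · simpa [Bool.le_iff_imp, hab.symm] using hle b

lemma exists_disjoint_rankSet (hK : 2 ≤ K) :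
    ∃ r s : Fin K → Bool, Disjoint (rankSet K r) (rankSet K s) := by
  have : Nontrivial (Fin K) := Fin.nontrivial_iff_two_le.mpr hK
  obtain ⟨a, b, hab⟩ := exists_pair_ne (Fin K)
  exact ⟨_, _, disjoint_rankSet_decide_eq hab⟩

end RankSet

/-- For `K ≥ 2`, the Helly number of `{𝒴(r) : r ∈ {0,1}^K}` equals 2.
In particular: (i) pairwise-intersecting families of such sets have a common element, and
(ii) there are two such sets that are disjoint. -/
theorem stmt13 (K : ℕ) (hK : 2 ≤ K) :
    (HellyAt {S | ∃ r : Fin K → Bool, S = rankSet K r} 2 ∧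
      ∀ q < 2, ¬ HellyAt {S | ∃ r : Fin K → Bool, S = rankSet K r} q) ∧
    (∀ (Q : ℕ) (r : Fin Q → Fin K → Bool),
      (∀ i j : Fin Q, (rankSet K (r i) ∩ rankSet K (r j)).Nonempty) →
      (⋂ i : Fin Q, rankSet K (r i)).Nonempty) ∧
    (∃ r r' : Fin K → Bool, rankSet K r ∩ rankSet K r' = ∅) := by
  have hrange : {S | ∃ r : Fin K → Bool, S = rankSet K r} = Set.range (rankSet K) := by
    simp only [Set.range, eq_comm]
  obtain ⟨r, s, hrs⟩ := exists_disjoint_rankSet hK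
  rw [hrange]
  refine ⟨⟨hellyAt_two_range_rankSet K, fun q hq => ?_⟩,
    fun Q r => iInter_rankSet_nonempty, r, s, hrs.inter_eq⟩
  exact not_hellyAt_of_disjoint (Set.mem_range_self r) (Set.mem_range_self s)
    (rankSet_nonempty r) (rankSet_nonempty s) hrs hq
end

section
/- Fix q ∈ ℕ and K ∈ ℕ with K ≥ q+1. There exist bit strings y_1,…,y_{2^{q+1}} ∈ {0,1}^K such that ⋂_{i=1}^{2^{q+1}} B(y_i, q) = ∅, while for every j ∈ [2^{q+1}] one has ⋂_{i ≠ j} B(y_i, q) ≠ ∅. Consequently, the Helly number of the collection {B(y,q) : y ∈ {0,1}^K} is at least 2^{q+1}. -/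
/-- The Hamming ball of radius `q` centered at `y ∈ {0,1}^K`. -/
def hBall (K q : ℕ) (y : Fin K → Bool) : Set (Fin K → Bool) :=
  {z | hammingDist y z ≤ q}

/-!
Let two words `u` and `v` differ on a set `s` of `q + 1` coordinates, and let the centres be the
`2 ^ (q + 1)` words obtained from `u` by switching to `v` on a subset of `s`. For any word `z`, one
of these centres differs from `z` at every coordinate of `s`, so no point lies in all balls of
radius `q`. The centre indexed by `s \ b`, on the other hand, is at distance `q + 1` only from its
antipode, the centre indexed by `b`, so it lies in all the other balls. Since omitting any single
ball makes the intersection nonempty, the only subcollection with empty intersection is the whole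
collection.
-/

open Finset
open scoped symmDiff

/-- A family of sets that is minimal with empty intersection: all its members together have no
common point, but omitting any one of them leaves a common point. Minimality is with respect to the
indices, which also forces the members to be distinct. -/
structure IsCriticalFamily {ι Y : Type*} (f : ι → Set Y) : Prop where
  iInter_eq_empty : ⋂ i, f i = ∅
  nonempty_iInter_ne : ∀ j, (⋂ i ∈ {i | i ≠ j}, f i).Nonempty

namespace IsCriticalFamily

variable {ι κ Y : Type*} {f : ι → Set Y}

lemma exists_forall_ne_mem (hf : IsCriticalFamily f) (j : ι) : ∃ x, ∀ i ≠ j, x ∈ f i := by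
  simpa [Set.Nonempty] using hf.nonempty_iInter_ne j

lemma exists_notMem (hf : IsCriticalFamily f) (x : Y) : ∃ i, x ∉ f i := by
  simpa using Set.eq_empty_iff_forall_notMem.1 hf.iInter_eq_empty x

lemma injective (hf : IsCriticalFamily f) : Function.Injective f := by
  intro i j hij
  by_contra hne
  obtain ⟨x, hx⟩ := hf.exists_forall_ne_mem j
  obtain ⟨k, hk⟩ := hf.exists_notMem x
  obtain rfl : k = j := by_contra fun hkj => hk (hx k hkj)
  exact hk (hij ▸ hx i hne)

lemma comp_equiv (hf : IsCriticalFamily f) (e : κ ≃ ι) : IsCriticalFamily (f ∘ e) where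
  iInter_eq_empty := (e.surjective.iInter_comp f).trans hf.iInter_eq_empty
  nonempty_iInter_ne j := by
    obtain ⟨x, hx⟩ := hf.exists_forall_ne_mem (e j)
    exact ⟨x, Set.mem_iInter₂.2 fun i hij => hx (e i) (e.injective.ne hij)⟩

lemma range_subset_of_sInter_eq_empty (hf : IsCriticalFamily f) {C : Set (Set Y)}
    (hC : C ⊆ Set.range f) (hempty : ⋂₀ C = ∅) : Set.range f ⊆ C := by
  rintro _ ⟨j, rfl⟩
  by_contra hj
  obtain ⟨x, hx⟩ := hf.exists_forall_ne_mem j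
  refine Set.eq_empty_iff_forall_notMem.1 hempty x fun B hB => ?_
  obtain ⟨i, rfl⟩ := hC hB
  exact hx i (ne_of_apply_ne f (ne_of_mem_of_not_mem hB hj))

lemma not_hellyAt (hf : IsCriticalFamily f) {𝒮 : Set (Set Y)} (hmem : ∀ i, f i ∈ 𝒮) {p : ℕ}
    (hp : p < ENat.card ι) : ¬ HellyAt 𝒮 p := by
  intro hHelly
  obtain ⟨C, hC, hfin, hcard, hempty⟩ :=
    hHelly (Set.range f) (Set.range_subset_iff.2 hmem) (Set.sInter_range f ▸ hf.iInter_eq_empty)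
  refine hp.not_ge ?_
  calc ENat.card ι ≤ (Set.range f).encard := hf.injective.encard_range
    _ ≤ C.encard := Set.encard_le_encard (hf.range_subset_of_sInter_eq_empty hC hempty)
    _ = C.ncard := hfin.cast_ncard_eq.symm
    _ ≤ p := by exact_mod_cast hcard

end IsCriticalFamily

section Finset

variable {ι : Type*} [DecidableEq ι]

lemma symmDiff_sdiff_ssubset {s a b : Finset ι} (ha : a ⊆ s) (hb : b ⊆ s) (hab : a ≠ b) :
    a ∆ (s \ b) ⊂ s := by
  refine (symmDiff_le_sup.trans (union_subset ha sdiff_subset)).ssubset_of_ne fun h => hab ?_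
  calc a = a ∆ (s \ b) ∆ (s \ b) := (symmDiff_symmDiff_cancel_right _ _).symm
    _ = s ∆ (s \ b) := by rw [h]
    _ = b := by rw [← symmDiff_of_ge hb, symmDiff_symmDiff_cancel_left]

lemma exists_subset_forall_piecewise_ne {β : ι → Type*} {s : Finset ι} {u v : ∀ i, β i}
    (huv : ∀ i ∈ s, u i ≠ v i) (z : ∀ i, β i) :
    ∃ a ⊆ s, ∀ i ∈ s, a.piecewise v u i ≠ z i := by
  classical
  refine ⟨{i ∈ s | v i ≠ z i}, filter_subset _ _, fun i hi => ?_⟩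
  by_cases hz : v i = z i
  · simpa [hz] using hz ▸ huv i hi
  · simp [hi, hz]

end Finset

section Hamming

variable {ι : Type*} {β : ι → Type*} [Fintype ι] [∀ i, DecidableEq (β i)]

/-- The Hamming ball of radius `q` centred at `y`, in a product of arbitrary alphabets. For words
over `Bool` it unfolds to `hBall`. -/
def hammingBall (q : ℕ) (y : ∀ i, β i) : Set (∀ i, β i) :=
  {z | hammingDist y z ≤ q}

lemma card_le_hammingDist {s : Finset ι} {x y : ∀ i, β i} (h : ∀ i ∈ s, x i ≠ y i) :
    #s ≤ hammingDist x y :=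
  card_le_card fun i hi => mem_filter.2 ⟨mem_univ i, h i hi⟩

lemma hammingDist_piecewise_le_card_symmDiff [DecidableEq ι] (a b : Finset ι) (u v : ∀ i, β i) :
    hammingDist (a.piecewise v u) (b.piecewise v u) ≤ #(a ∆ b) := by
  refine card_le_card fun i hi => ?_
  by_contra hab
  have hiff : i ∈ a ↔ i ∈ b := by
    rw [mem_symmDiff] at hab
    tauto
  exact (mem_filter.1 hi).2 (by simp only [piecewise, hiff])

lemma isCriticalFamily_hammingBall_piecewise [DecidableEq ι] {q : ℕ} {s : Finset ι}
    (hs : #s = q + 1) {u v : ∀ i, β i} (huv : ∀ i ∈ s, u i ≠ v i) :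
    IsCriticalFamily fun a : s.powerset => hammingBall q ((a : Finset ι).piecewise v u) where
  iInter_eq_empty := by
    refine Set.eq_empty_iff_forall_notMem.2 fun z hz => ?_
    obtain ⟨a, ha, hne⟩ := exists_subset_forall_piecewise_ne huv z
    have hfar : q + 1 ≤ hammingDist (a.piecewise v u) z := hs ▸ card_le_hammingDist hne
    exact hfar.not_gt (Nat.lt_succ_of_le (Set.mem_iInter.1 hz ⟨a, mem_powerset.2 ha⟩))
  nonempty_iInter_ne := by
    rintro ⟨b, hb⟩
    refine ⟨(s \ b).piecewise v u, Set.mem_iInter₂.2 ?_⟩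
    rintro ⟨a, ha⟩ hab
    have hlt : #(a ∆ (s \ b)) < q + 1 := hs ▸ card_lt_card
      (symmDiff_sdiff_ssubset (mem_powerset.1 ha) (mem_powerset.1 hb) fun h => hab (Subtype.ext h))
    exact (hammingDist_piecewise_le_card_symmDiff a (s \ b) u v).trans (Nat.le_of_lt_succ hlt)

lemma exists_isCriticalFamily_hammingBall [∀ i, Nontrivial (β i)] {q : ℕ}
    (hq : q + 1 ≤ Fintype.card ι) :
    ∃ ys : Fin (2 ^ (q + 1)) → ∀ i, β i, IsCriticalFamily fun j => hammingBall q (ys j) := by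
  classical
  obtain ⟨s, -, hs⟩ := exists_subset_card_eq (s := (univ : Finset ι)) hq
  choose u v huv using fun i => exists_pair_ne (β i)
  have hcard : #s.powerset = 2 ^ (q + 1) := by rw [card_powerset, hs]
  let e : Fin (2 ^ (q + 1)) ≃ s.powerset := (equivFinOfCardEq hcard).symm
  exact ⟨fun j => (e j : Finset ι).piecewise v u,
    (isCriticalFamily_hammingBall_piecewise hs fun i _ => huv i).comp_equiv e⟩

end Hamming

theorem stmt16_general {ι : Type*} {β : ι → Type*} [Fintype ι] [∀ i, DecidableEq (β i)]
    [∀ i, Nontrivial (β i)] (q : ℕ) (hq : q + 1 ≤ Fintype.card ι) :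
    (∃ ys : Fin (2 ^ (q + 1)) → (∀ i, β i),
      (⋂ i, hammingBall q (ys i)) = ∅ ∧
      ∀ j, (⋂ i ∈ {i | i ≠ j}, hammingBall q (ys i)).Nonempty) ∧
    (∀ p : ℕ, p < 2 ^ (q + 1) →
      ¬ HellyAt {B | ∃ y : ∀ i, β i, B = hammingBall q y} p) := by
  obtain ⟨ys, hys⟩ := exists_isCriticalFamily_hammingBall (β := β) hq
  refine ⟨⟨ys, hys.iInter_eq_empty, hys.nonempty_iInter_ne⟩, fun p hp => ?_⟩
  have hcard : (p : ℕ∞) < ENat.card (Fin (2 ^ (q + 1))) := by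
    rw [ENat.card_eq_coe_fintype_card, Fintype.card_fin]
    exact_mod_cast hp
  refine hys.not_hellyAt ?_ hcard
  exact fun j => ⟨ys j, rfl⟩

/-- For `K ≥ q+1` there are `2^{q+1}` Hamming balls of radius `q` in `{0,1}^K`
with empty total intersection such that every subfamily omitting one ball has a common
element; consequently the Helly number of the radius-`q` Hamming balls is at least
`2^{q+1}`. -/
theorem stmt16 (q K : ℕ) (hK : q + 1 ≤ K) :
    (∃ ys : Fin (2 ^ (q + 1)) → (Fin K → Bool),
      (⋂ i : Fin (2 ^ (q + 1)), hBall K q (ys i)) = ∅ ∧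
      ∀ j : Fin (2 ^ (q + 1)), (⋂ i ∈ {i : Fin (2 ^ (q + 1)) | i ≠ j}, hBall K q (ys i)).Nonempty) ∧
    (∀ p : ℕ, p < 2 ^ (q + 1) → ¬ HellyAt {B | ∃ y : Fin K → Bool, B = hBall K q y} p) :=
  stmt16_general q (by rwa [Fintype.card_fin])
end

section
/- Let A_1 = {1,4,5}, A_2 = {2,5,6}, A_3 = {3,4,6} (subsets of {1,…,6}), and let S_1,…,S_T be any finite sequence with S_t ∈ {A_1, A_2, A_3} for every t ∈ [T]. Then min_{i ∈ {1,2,3}} Σ_{t=1}^T 1{i ∉ S_t} ≥ (1/2) Σ_{t=2}^T 1{S_t ≠ S_{t-1}}. -/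
/-!
Each label `i ∈ {1, 2, 3}` lies in exactly one of the three sets, so two different sets cannot both
contain `i`. Hence at every switch `S t ≠ S (t - 1)` the label `i` errs at round `t` or at round
`t - 1`: the switching rounds lie in `E ∪ (E + 1)`, where `E` is the set of rounds at which `i`
errs, and there are at most `2 |E|` of them.
-/

lemma card_le_two_mul_card_of_subset_union_image {α : Type*} [DecidableEq α] {s t : Finset α}
    {f : α → α} (h : s ⊆ t ∪ t.image f) : s.card ≤ 2 * t.card :=
  calc
    s.card ≤ (t ∪ t.image f).card := Finset.card_le_card h
    _ ≤ t.card + (t.image f).card := Finset.card_union_le _ _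
    _ ≤ t.card + t.card := Nat.add_le_add_left Finset.card_image_le _
    _ = 2 * t.card := (two_mul _).symm

lemma filter_ne_pred_subset_union_image_succ {β : Type*} [DecidableEq β] {x : ℕ → β}
    {p : ℕ → Prop} [DecidablePred p] {T : ℕ}
    (h : ∀ t, t + 1 < T → x (t + 1) ≠ x t → p (t + 1) ∨ p t) :
    (Finset.Ico 1 T).filter (fun t => x t ≠ x (t - 1)) ⊆
      (Finset.range T).filter p ∪ ((Finset.range T).filter p).image Nat.succ := by
  intro t ht
  obtain ⟨ht, hne⟩ := Finset.mem_filter.1 ht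
  obtain ⟨h_pos, h_lt⟩ := Finset.mem_Ico.1 ht
  obtain ⟨r, rfl⟩ := Nat.exists_eq_add_of_le' h_pos
  rcases h r h_lt hne with h_now | h_before
  · exact Finset.mem_union_left _ (Finset.mem_filter.2 ⟨Finset.mem_range.2 h_lt, h_now⟩)
  · have hr : r ∈ (Finset.range T).filter p :=
      Finset.mem_filter.2 ⟨Finset.mem_range.2 (Nat.lt_of_succ_lt h_lt), h_before⟩
    exact Finset.mem_union_right _ (Finset.mem_image_of_mem Nat.succ hr)

open scoped Classical in
theorem stmt19_general {α : Type*} {𝒜 : Set (Set α)} {T : ℕ} {S : ℕ → Set α} {i : α}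
    (hS : ∀ t < T, S t ∈ 𝒜) (hi : {A ∈ 𝒜 | i ∈ A}.Subsingleton) :
    (((Finset.Ico 1 T).filter fun t => S t ≠ S (t - 1)).card : ℝ) / 2 ≤
      ((Finset.range T).filter fun t => i ∉ S t).card := by
  have h_miss : ∀ t, t + 1 < T → S (t + 1) ≠ S t → i ∉ S (t + 1) ∨ i ∉ S t := by
    intro t ht hne
    by_contra! h
    exact hne (hi ⟨hS (t + 1) ht, h.1⟩ ⟨hS t (Nat.lt_of_succ_lt ht), h.2⟩)
  have h_card := card_le_two_mul_card_of_subset_union_image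
    (filter_ne_pred_subset_union_image_succ (p := fun t => i ∉ S t) h_miss)
  rw [div_le_iff₀' two_pos]
  exact_mod_cast h_card

lemma subsingleton_setOf_mem_of_mem_one_two_three {i : ℕ} (hi : i ∈ ({1, 2, 3} : Set ℕ)) :
    {A ∈ ({{1, 4, 5}, {2, 5, 6}, {3, 4, 6}} : Set (Set ℕ)) | i ∈ A}.Subsingleton := by
  rintro A ⟨rfl | rfl | rfl, hA⟩ B ⟨rfl | rfl | rfl, hB⟩
  all_goals
    first
    | rfl
    | simp only [Set.mem_insert_iff, Set.mem_singleton_iff] at hi hA hB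
      omega

open scoped Classical in
/-- For `A₁ = {1,4,5}`, `A₂ = {2,5,6}`, `A₃ = {3,4,6}` and any sequence
`S_1,…,S_T` of sets from `{A₁,A₂,A₃}` (indexed here by `t = 0,…,T-1`), the best fixed label
among `{1,2,3}` errs at least half as often as the sequence switches:
`min_i Σ_t 1{i ∉ S_t} ≥ (1/2) Σ_{t≥1} 1{S_t ≠ S_{t-1}}`. -/
theorem stmt19 (T : ℕ) (S : ℕ → Set ℕ)
    (hS : ∀ t < T, S t ∈ ({({1, 4, 5} : Set ℕ), {2, 5, 6}, {3, 4, 6}} : Set (Set ℕ))) :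
    ((((Finset.Ico 1 T).filter fun t => S t ≠ S (t - 1)).card : ℝ)) / 2 ≤
      min (min ((((Finset.range T).filter fun t => (1 : ℕ) ∉ S t).card : ℝ))
            ((((Finset.range T).filter fun t => (2 : ℕ) ∉ S t).card : ℝ)))
        ((((Finset.range T).filter fun t => (3 : ℕ) ∉ S t).card : ℝ)) := by
  have h_label (i : ℕ) (hi : i ∈ ({1, 2, 3} : Set ℕ)) :=
    stmt19_general hS (subsingleton_setOf_mem_of_mem_one_two_three hi)
  exact le_min (le_min (h_label 1 (by simp)) (h_label 2 (by simp))) (h_label 3 (by simp))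
end
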